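/- Let S be an infinite set of natural numbers, each at least 5. Then there is no algorithm that, given a finite presentation, decides whether or not the group presented has infinitely many quotients among the alternating groups {Alt(n) : n ∈ S}. Formally: the predicate on encoded finite presentations (s, L) given by 'the set {n ∈ S : there exists a surjective group homomorphism from the presented group P(s,L) onto Alt(n)} is infinite' is not a computable predicate (¬ ComputablePred). -/

import Mathlib

/-- The codes for each number of generators form a denumerable type. -/
instance (s : ℕ) : Denumerable (List (List (Fin s × Bool))) :=
  Denumerable.ofEncodableOfInfinite _

/-- The group presented by a finite presentation encoded as `(s, L)`, where `s` is the number
of generators and each entry of `L` is a word in the generators and their inverses. -/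
def presentedGroupOf (p : Σ s : ℕ, List (List (Fin s × Bool))) : Type :=
  PresentedGroup {x : FreeGroup (Fin p.1) | ∃ w ∈ p.2, x = FreeGroup.mk w}

instance (p : Σ s : ℕ, List (List (Fin s × Bool))) : Group (presentedGroupOf p) := by
  unfold presentedGroupOf; infer_instance

/-!
Self-application yields a finite multi-stack machine for which no decidable set contains every
rejected input and no accepted one. With each input `n` one associates, computably, a finitely
presented group that is cyclic if `n` is accepted and maps onto almost all alternating groups if `n`
is rejected.

In this group a control state `q` has a "row" that behaves like a vector, stack symbols act on rows
through commutators with elements satisfying the Steinberg relations of elementary matrices, and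
the letters of different stacks commute because the places involved can be moved apart. So a
row with a word in the letters acting on it is a machine configuration; the relators say that one
step of the machine does not change this element, and that the accepting row is trivial. The test
element is the configuration of the input `n`; it conjugates one element of a glued copy of
`Alt(8)` to another, and one elementary matrix lies in that copy. If the input is accepted, the test
element is trivial, hence so are `Alt(8)`, this elementary matrix and all others, and only one
additional free generator remains. If the input is rejected, its run is finite (a history stack
makes the steps reversible), and the finite set of configurations on the run gives a finite model
over `𝔽₂` in which the test element survives. The resulting finite permutation group, with
the free generator sent to a long cycle, generates `Alt(N)` for all large `N` by Jordan's theorem.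
-/

namespace AlternatingQuotients

section Encoding

open Encodable

attribute [local instance] Encodable.decidableRangeEncode

/-- The rank of a code: the number of smaller natural numbers that encode an element of `β`. -/
def codeRank (β : Type) [Primcodable β] (m : ℕ) : ℕ :=
  ((List.range m).filter (· ∈ Set.range (encode : β → ℕ))).length

theorem primrec_codeRank (β : Type) [Primcodable β] : Primrec (codeRank β) :=
  Primrec.list_length.comp
    ((Primrec.listFilter Primcodable.mem_range_encode).comp Primrec.list_range)

theorem encode_ofEncodableOfInfinite (β : Type) [Primcodable β] [Infinite β] (b : β) :
    (Denumerable.ofEncodableOfInfinite β).toEncodable.encode b = codeRank β (encode b) :=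
  List.countP_eq_length_filter

/-- The encoding of lists of lists by iterated pairing. The ambient instance on the same type
composes it with `codeRank`, so as to be onto. -/
abbrev pairingPrimcodable (s : ℕ) : Primcodable (List (List (Fin s × Bool))) :=
  @Primcodable.list (List (Fin s × Bool)) Primcodable.list

theorem computable_sigmaMk {s : ℕ} {f : ℕ → List (List (Fin s × Bool))}
    (hf : @Computable _ _ _ (pairingPrimcodable s) f) :
    Computable fun n => (⟨s, f n⟩ : Σ s : ℕ, List (List (Fin s × Bool))) := by
  rw [← Computable.encode_iff]
  let := pairingPrimcodable s
  have encode_mk : ∀ n, Nat.pair s (codeRank (List (List (Fin s × Bool))) (encode (f n))) =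
      @encode _ (Primcodable.ofDenumerable
        (Σ s : ℕ, List (List (Fin s × Bool)))).toEncodable ⟨s, f n⟩ :=
    fun n => congrArg (Nat.pair s) (encode_ofEncodableOfInfinite _ (f n)).symm
  exact (Primrec₂.natPair.to_comp.comp (Computable.const s) ((primrec_codeRank _).to_comp.comp
    (Computable.encode_iff.2 hf))).of_eq encode_mk

end Encoding

/-- A deterministic machine with stacks over the alphabet `A`, indexed by `K`. In state `q` it pops
the top letter `a` of the stack `stack q`, and `trans q a` is the next state together with the word
pushed in its place; it stops in the states `accept` and `reject`. On input `n` it starts with the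
stacks `base` and `n` further copies of the letter `unit` on top of the stack `input`. -/
structure StackMachine (Q K A : Type*) where
  stack : Q → K
  trans : Q → A → Q × List A
  start : Q
  accept : Q
  reject : Q
  input : K
  unit : A
  base : K → List A

namespace StackMachine

variable {Q K A : Type*} [DecidableEq K]

/-- The computation step relation on configurations, that is, states with stack contents. -/
def Step (M : StackMachine Q K A) (c d : Q × (K → List A)) : Prop :=
  c.1 ≠ M.accept ∧ c.1 ≠ M.reject ∧ ∃ a t, c.2 (M.stack c.1) = a :: t ∧
    d = ((M.trans c.1 a).1, Function.update c.2 (M.stack c.1) ((M.trans c.1 a).2 ++ t))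

/-- Reachability in any number of steps. -/
def Reaches (M : StackMachine Q K A) : Q × (K → List A) → Q × (K → List A) → Prop :=
  Relation.ReflTransGen M.Step

/-- The initial configuration on input `n`. -/
def init (M : StackMachine Q K A) (n : ℕ) : Q × (K → List A) :=
  (M.start, Function.update M.base M.input (List.replicate n M.unit ++ M.base M.input))

/-- The machine stops in the accepting state on input `n`. -/
def Accepts (M : StackMachine Q K A) (n : ℕ) : Prop :=
  ∃ S, M.Reaches (M.init n) (M.accept, S)

/-- The machine stops in the rejecting state on input `n`. -/
def Rejects (M : StackMachine Q K A) (n : ℕ) : Prop :=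
  ∃ S, M.Reaches (M.init n) (M.reject, S)

/-- A set of states that a computation never leaves and that contains the distinguished states. -/
structure IsClosed (M : StackMachine Q K A) (F : Set Q) : Prop where
  start_mem : M.start ∈ F
  accept_mem : M.accept ∈ F
  reject_mem : M.reject ∈ F
  trans_mem : ∀ q ∈ F, ∀ a, (M.trans q a).1 ∈ F

/-- The machine with its states restricted to a closed set. -/
def restrict (M : StackMachine Q K A) {F : Set Q} (hF : M.IsClosed F) : StackMachine F K A where
  stack q := M.stack q
  trans q a := (⟨(M.trans q a).1, hF.trans_mem q q.2 a⟩, (M.trans q a).2)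
  start := ⟨M.start, hF.start_mem⟩
  accept := ⟨M.accept, hF.accept_mem⟩
  reject := ⟨M.reject, hF.reject_mem⟩
  input := M.input
  unit := M.unit
  base := M.base

theorem Reaches.restrict {M : StackMachine Q K A} {F : Set Q} (hF : M.IsClosed F) {n : ℕ}
    {d : Q × (K → List A)} (h : M.Reaches (M.init n) d) :
    ∃ hd : d.1 ∈ F, (M.restrict hF).Reaches ((M.restrict hF).init n) (⟨d.1, hd⟩, d.2) := by
  induction h with
  | refl => exact ⟨hF.start_mem, Relation.ReflTransGen.refl⟩
  | tail _ hstep ih =>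
    obtain ⟨hmem, ih⟩ := ih
    obtain ⟨haccept, hreject, a, t, hpop, rfl⟩ := hstep
    exact ⟨hF.trans_mem _ hmem _, ih.tail ⟨fun h => haccept (congrArg Subtype.val h),
      fun h => hreject (congrArg Subtype.val h), a, t, hpop, rfl⟩⟩

theorem Accepts.restrict {M : StackMachine Q K A} {F : Set Q} (hF : M.IsClosed F) {n : ℕ}
    (h : M.Accepts n) : (M.restrict hF).Accepts n :=
  let ⟨S, hS⟩ := h
  ⟨S, (hS.restrict hF).2⟩

theorem Rejects.restrict {M : StackMachine Q K A} {F : Set Q} (hF : M.IsClosed F) {n : ℕ}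
    (h : M.Rejects n) : (M.restrict hF).Rejects n :=
  let ⟨S, hS⟩ := h
  ⟨S, (hS.restrict hF).2⟩

end StackMachine

section Simulation

open Turing Turing.PartrecToTM2

/-- The states of the machine simulating the evaluator `Turing.PartrecToTM2.tr`: a statement being
executed with the value of the local variable, or a verdict (`true` for acceptance). -/
abbrev SimState := (Stmt' × Option Γ') ⊕ Bool

/-- The stack inspected in a state of the simulation. -/
def simStack : SimState → K'
  | .inl (.push k _ _, _) => k
  | .inl (.peek k _ _, _) => k
  | .inl (.pop k _ _, _) => k
  | _ => K'.main

/-- The transition function of the simulation. The letter `none` marks the bottom of a stack, and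
a halted computation is accepted if the topmost digit of its output is zero. -/
def simTrans : SimState → Option Γ' → SimState × List (Option Γ')
  | .inl (.push _ f q, v), o => (.inl (q, v), [some (f v), o])
  | .inl (.peek _ f q, v), o => (.inl (q, f v o), [o])
  | .inl (.pop _ f q, v), o => (.inl (q, f v o), match o with | none => [none] | some _ => [])
  | .inl (.load f q, v), o => (.inl (q, f v), [o])
  | .inl (.branch f q₁ q₂, v), o => (.inl (cond (f v) q₁ q₂, v), [o])
  | .inl (.goto f, v), o => (.inl (tr (f v), v), [o])
  | .inl (.halt, _), o => (.inr (decide (o = some Γ'.cons)), [o])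
  | .inr b, o => (.inr b, [o])

/-- The stacks of the evaluator, with bottom markers. -/
def encodeStacks (S : K' → List Γ') : K' → List (Option Γ') :=
  fun k => (S k).map some ++ [none]

/-- The stack machine simulating the evaluator of a code. Its input `n` stands for the number
`2 ^ n`, whose binary digits are `n` zeros below a one. -/
def simMachine (c : ToPartrec.Code) : StackMachine SimState K' (Option Γ') where
  stack := simStack
  trans := simTrans
  start := .inl (tr (trNormal c Cont'.halt), none)
  accept := .inr true
  reject := .inr false
  input := K'.main
  unit := some Γ'.bit0
  base := encodeStacks (K'.elim [Γ'.bit1, Γ'.cons] [] [] [])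

theorem encodeStacks_eq_cons (S : K' → List Γ') (k : K') :
    encodeStacks S k = (S k).head? :: (encodeStacks S k).tail := by
  unfold encodeStacks
  cases S k <;> rfl

theorem encodeStacks_update (S : K' → List Γ') (k : K') (l : List Γ') :
    encodeStacks (Function.update S k l) =
      Function.update (encodeStacks S) k (l.map some ++ [none]) := by
  funext k'
  by_cases h : k' = k
  · subst h; simp [encodeStacks]
  · simp [encodeStacks, h]

/-- The configuration of the simulation that corresponds to one of the evaluator. -/
def encodeCfg (x : Cfg') : SimState × (K' → List (Option Γ')) :=
  (match x.l with
    | some l => .inl (tr l, x.var)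
    | none => .inl (.halt, x.var), encodeStacks x.stk)

theorem simMachine_step_update (c : ToPartrec.Code) {q : Stmt' × Option Γ'} {q' : SimState}
    {S : K' → List Γ'} {l : List Γ'} {w : List (Option Γ')}
    (htrans : simTrans (.inl q) (S (simStack (.inl q))).head? = (q', w))
    (hl : l.map some ++ [none] = w ++ (encodeStacks S (simStack (.inl q))).tail) :
    (simMachine c).Step (.inl q, encodeStacks S)
      (q', encodeStacks (Function.update S (simStack (.inl q)) l)) := by
  refine ⟨Sum.inl_ne_inr, Sum.inl_ne_inr, _, _, encodeStacks_eq_cons S _, ?_⟩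
  change _ = ((simTrans (.inl q) (S (simStack (.inl q))).head?).1,
    Function.update (encodeStacks S) (simStack (.inl q))
      ((simTrans (.inl q) (S (simStack (.inl q))).head?).2 ++ _))
  rw [htrans, encodeStacks_update, hl]
  rfl

theorem simMachine_step (c : ToPartrec.Code) {q : Stmt' × Option Γ'} {q' : SimState}
    {S : K' → List Γ'}
    (htrans : simTrans (.inl q) (S (simStack (.inl q))).head? =
      (q', [(S (simStack (.inl q))).head?])) :
    (simMachine c).Step (.inl q, encodeStacks S) (q', encodeStacks S) := by
  have h := simMachine_step_update c (l := S (simStack (.inl q))) htrans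
    (encodeStacks_eq_cons S (simStack (.inl q)))
  rwa [Function.update_eq_self] at h

theorem simMachine_reaches_stepAux (c : ToPartrec.Code) (s : Stmt') (v : Option Γ')
    (S : K' → List Γ') :
    (simMachine c).Reaches (.inl (s, v), encodeStacks S) (encodeCfg (TM2.stepAux s v S)) := by
  induction s generalizing v S with
  | push k f s ih =>
    exact (ih v (Function.update S k (f v :: S k))).head (simMachine_step_update c rfl
      (l := f v :: S k) (congrArg (some (f v) :: ·) (encodeStacks_eq_cons S k)))
  | peek k f s ih => exact (ih _ S).head (simMachine_step c rfl)
  | pop k f s ih =>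
    refine (ih (f v (S k).head?) (Function.update S k (S k).tail)).head
      (simMachine_step_update c rfl ?_)
    change _ = _ ++ (encodeStacks S k).tail
    simp only [encodeStacks, simStack]
    cases S k <;> rfl
  | load f s ih => exact (ih _ S).head (simMachine_step c rfl)
  | branch f s₁ s₂ ih₁ ih₂ =>
    refine Relation.ReflTransGen.head (simMachine_step c (q' := .inl (cond (f v) s₁ s₂, v)) rfl) ?_
    rw [TM2.stepAux]
    cases f v
    exacts [ih₂ v S, ih₁ v S]
  | goto f => exact Relation.ReflTransGen.single (simMachine_step c rfl)
  | halt => exact Relation.ReflTransGen.refl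

theorem simMachine_reaches_encodeCfg (c : ToPartrec.Code) {x y : Cfg'}
    (h : StateTransition.Reaches (TM2.step tr) x y) :
    (simMachine c).Reaches (encodeCfg x) (encodeCfg y) := by
  induction h with
  | refl => exact Relation.ReflTransGen.refl
  | @tail b d _ hstep ih =>
    refine ih.trans ?_
    obtain ⟨_ | l, v, S⟩ := b
    · cases hstep
    · obtain rfl := Option.mem_some_iff.1 hstep
      exact simMachine_reaches_stepAux c _ _ _

theorem trNat_two_pow (n : ℕ) : trNat (2 ^ n) = List.replicate n Γ'.bit0 ++ [Γ'.bit1] := by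
  have pow_eq_pos : ∀ n : ℕ, ∃ p : PosNum, ((2 ^ n : ℕ) : Num) = Num.pos p ∧
      trPosNum p = List.replicate n Γ'.bit0 ++ [Γ'.bit1] := by
    intro n
    induction n with
    | zero => exact ⟨1, by simp; rfl, rfl⟩
    | succ n ih =>
      obtain ⟨p, hcast, hdigits⟩ := ih
      refine ⟨p.bit0, ?_, by rw [trPosNum, hdigits]; rfl⟩
      rw [pow_succ, mul_two, Nat.cast_add, hcast]
      exact Num.bit0_of_bit0 (Num.pos p)
  obtain ⟨p, hcast, hdigits⟩ := pow_eq_pos n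
  rw [trNat, hcast]
  exact hdigits

theorem simMachine_init (c : ToPartrec.Code) (n : ℕ) :
    (simMachine c).init n = encodeCfg (PartrecToTM2.init c [2 ^ n]) := by
  refine Prod.ext rfl (funext fun k => ?_)
  cases k <;>
    simp [StackMachine.init, simMachine, encodeCfg, PartrecToTM2.init, encodeStacks, trNat_two_pow]

theorem simMachine_reaches_halt (c : ToPartrec.Code) {n b : ℕ} (h : [b] ∈ c.eval [2 ^ n]) :
    (simMachine c).Reaches ((simMachine c).init n) (encodeCfg (PartrecToTM2.halt [b])) := by
  have hhalt : PartrecToTM2.halt [b] ∈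
      StateTransition.eval (TM2.step tr) (PartrecToTM2.init c [2 ^ n]) :=
    tr_eval c [2 ^ n] ▸ Part.mem_map _ h
  rw [simMachine_init]
  exact simMachine_reaches_encodeCfg c (StateTransition.mem_eval.1 hhalt).1

theorem simMachine_accepts (c : ToPartrec.Code) {n : ℕ} (h : [0] ∈ c.eval [2 ^ n]) :
    (simMachine c).Accepts n :=
  ⟨_, (simMachine_reaches_halt c h).tail (simMachine_step c rfl)⟩

theorem simMachine_rejects (c : ToPartrec.Code) {n : ℕ} (h : [1] ∈ c.eval [2 ^ n]) :
    (simMachine c).Rejects n :=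
  ⟨_, (simMachine_reaches_halt c h).tail (simMachine_step c rfl)⟩

instance : Finite K' := by
  have hsurj : Function.Surjective
      (fun i => [K'.main, K'.rev, K'.aux, K'.stack].get i) := by
    rintro (_ | _ | _ | _)
    exacts [⟨0, rfl⟩, ⟨1, rfl⟩, ⟨2, rfl⟩, ⟨3, rfl⟩]
  exact Finite.of_surjective _ hsurj

/-- The statements that occur while the evaluator runs the code `c`. -/
def codeStmts (c : ToPartrec.Code) : Set Stmt' :=
  {s | some s ∈ TM2.stmts tr (codeSupp c Cont'.halt)}

theorem finite_codeStmts (c : ToPartrec.Code) : (codeStmts c).Finite :=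
  Set.Finite.preimage (Option.some_injective _).injOn (Finset.finite_toSet _)

theorem tr_mem_codeStmts (c : ToPartrec.Code) {l : Λ'} (hl : l ∈ codeSupp c Cont'.halt) :
    tr l ∈ codeStmts c := by
  classical exact
  Finset.some_mem_insertNone.2 (Finset.mem_biUnion.2 ⟨l, hl, TM2.stmts₁_self⟩)

theorem simTrans_mem_codeStmts (c : ToPartrec.Code) {s : Stmt'} (hs : s ∈ codeStmts c)
    (v o : Option Γ') :
    (simTrans (.inl (s, v)) o).1 ∈ Sum.inl '' (codeStmts c ×ˢ Set.univ) ∪ Set.range Sum.inr := by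
  classical
  have of_substatement : ∀ (s' : Stmt') (v' : Option Γ'), s' ∈ TM2.stmts₁ s →
      (Sum.inl (s', v') : SimState) ∈
        Sum.inl '' (codeStmts c ×ˢ Set.univ) ∪ Set.range Sum.inr :=
    fun s' v' h => Or.inl ⟨_, ⟨TM2.stmts_trans h hs, Set.mem_univ _⟩, rfl⟩
  cases s with
  | push k f s => exact of_substatement _ _ (Finset.mem_insert_of_mem TM2.stmts₁_self)
  | peek k f s => exact of_substatement _ _ (Finset.mem_insert_of_mem TM2.stmts₁_self)
  | pop k f s => exact of_substatement _ _ (Finset.mem_insert_of_mem TM2.stmts₁_self)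
  | load f s => exact of_substatement _ _ (Finset.mem_insert_of_mem TM2.stmts₁_self)
  | branch f s₁ s₂ =>
    refine of_substatement _ _ (Finset.mem_insert_of_mem ?_)
    cases f v
    exacts [Finset.mem_union_right _ TM2.stmts₁_self, Finset.mem_union_left _ TM2.stmts₁_self]
  | goto f =>
    have hsupports := @TM2.stmts_supportsStmt _ _ _ _ ⟨trNormal c Cont'.halt⟩ _ _ _
      (tr_supports c Cont'.halt) hs
    exact Or.inl ⟨_, ⟨tr_mem_codeStmts c (hsupports v), Set.mem_univ _⟩, rfl⟩
  | halt => exact Or.inr ⟨_, rfl⟩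

theorem simMachine_exists_finite_isClosed (c : ToPartrec.Code) :
    ∃ F : Set SimState, F.Finite ∧ (simMachine c).IsClosed F := by
  refine ⟨Sum.inl '' (codeStmts c ×ˢ Set.univ) ∪ Set.range Sum.inr,
    (((finite_codeStmts c).prod Set.finite_univ).image _).union (Set.finite_range _),
    Or.inl ⟨_, ⟨tr_mem_codeStmts c (tr_supports c Cont'.halt).1, Set.mem_univ _⟩, rfl⟩,
    Or.inr ⟨_, rfl⟩, Or.inr ⟨_, rfl⟩, ?_⟩
  rintro q (⟨⟨s, v⟩, ⟨hs, -⟩, rfl⟩ | ⟨b, rfl⟩) a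
  · exact simTrans_mem_codeStmts c hs v a
  · exact Or.inr ⟨b, rfl⟩

end Simulation

section SelfApplication

open Turing

/-- The value of the `n`-th partial recursive function at `n`. -/
def selfApply (n : ℕ) : Part ℕ :=
  (Denumerable.ofNat Nat.Partrec.Code n).eval n

theorem partrec_selfApply : Partrec selfApply :=
  Nat.Partrec.Code.eval_part.comp (Computable.ofNat _) Computable.id

theorem not_computablePred_of_selfApply {p : ℕ → Prop} (hzero : ∀ n, 0 ∈ selfApply n → ¬p n)
    (hone : ∀ n, 1 ∈ selfApply n → p n) : ¬ComputablePred p := by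
  intro hp
  obtain ⟨f, hf, rfl⟩ := ComputablePred.computable_iff.1 hp
  have hflip : Computable fun n => cond (f n) 0 1 :=
    Computable.cond hf (Computable.const 0) (Computable.const 1)
  obtain ⟨c, hc⟩ := Nat.Partrec.Code.exists_code.1 (Partrec.nat_iff.1 hflip)
  have hself : selfApply (Encodable.encode c) =
      Part.some (cond (f (Encodable.encode c)) 0 1) := by
    rw [selfApply, Denumerable.ofNat_encode, hc]
    rfl
  have hf_one := hone (Encodable.encode c)
  have hf_zero := hzero (Encodable.encode c)
  rw [hself, Part.mem_some_iff] at hf_one hf_zero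
  cases h : f (Encodable.encode c) <;> simp [h] at hf_one hf_zero

/-- The partial function with value `selfApply n` at `2 ^ n`, undefined elsewhere. -/
def selfApplyLog (m : ℕ) : Part ℕ :=
  (Nat.rfind fun k => Part.some (decide (2 ^ k = m))).bind selfApply

theorem partrec_selfApplyLog : Partrec selfApplyLog := by
  have hpow : Primrec₂ fun k l : ℕ => k ^ l := Primrec₂.unpaired'.1 Nat.Primrec.pow
  have htest : Primrec fun x : ℕ × ℕ => decide (2 ^ x.2 = x.1) :=
    (Primrec.eq.comp (hpow.comp (Primrec.const 2) Primrec.snd) Primrec.fst).decide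
  refine Partrec.bind (Partrec.rfind ?_) (partrec_selfApply.comp Computable.snd)
  exact htest.to_comp

theorem mem_selfApplyLog_two_pow {n b : ℕ} (h : b ∈ selfApply n) : b ∈ selfApplyLog (2 ^ n) := by
  refine Part.mem_bind (Nat.mem_rfind.2 ⟨by simp, fun {m} hm => ?_⟩) h
  rw [Part.mem_some_iff, eq_comm, decide_eq_false_iff_not]
  exact fun heq => hm.ne (Nat.pow_right_injective le_rfl heq)

theorem exists_stackMachine_not_computablePred :
    ∃ (Q K A : Type) (_ : Finite Q) (_ : Finite K) (_ : Finite A) (_ : DecidableEq K)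
      (M : StackMachine Q K A), M.accept ≠ M.reject ∧
        ∀ p : ℕ → Prop, (∀ n, M.Accepts n → ¬p n) → (∀ n, M.Rejects n → p n) →
          ¬ComputablePred p := by
  obtain ⟨c, hc⟩ := ToPartrec.Code.exists_code (n := 1) (f := fun v => selfApplyLog v.head)
    (Nat.Partrec'.part_iff₁.2 partrec_selfApplyLog)
  have heval : ∀ n b, b ∈ selfApply n → [b] ∈ c.eval [2 ^ n] := fun n b hb => by
    have h : c.eval [2 ^ n] = pure <$> selfApplyLog (2 ^ n) := hc ⟨[2 ^ n], rfl⟩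
    exact h ▸ Part.mem_map _ (mem_selfApplyLog_two_pow hb)
  obtain ⟨F, hfinite, hF⟩ := simMachine_exists_finite_isClosed c
  refine ⟨F, PartrecToTM2.K', Option PartrecToTM2.Γ', hfinite.to_subtype, inferInstance,
    inferInstance, inferInstance, (simMachine c).restrict hF,
    fun h => Bool.noConfusion (Sum.inr_injective (congrArg Subtype.val h)), ?_⟩
  intro p haccept hreject
  exact not_computablePred_of_selfApply
    (fun n hn => haccept n ((simMachine_accepts c (heval n 0 hn)).restrict hF))
    (fun n hn => hreject n ((simMachine_rejects c (heval n 1 hn)).restrict hF))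

end SelfApplication

section Steinberg

open scoped commutatorElement

variable {G : Type*} [Group G]

/-- If `x` and `z` commute then `x y z y⁻¹ x⁻¹` is the conjugate of `⁅y, z⁆ z` by `x` and also the
conjugate of `y z y⁻¹` by `⁅x, y⁆`; comparing the two gives the result. -/
theorem commutatorElement_rotate {x y z : G} (hxz : ⁅x, z⁆ = 1) (hcomm : Commute ⁅y, z⁆ ⁅x, y⁆) :
    ⁅⁅x, y⁆, z⁆ = ⁅⁅y, z⁆⁻¹, x⁆ := by
  have hxz : x⁻¹ * z * x = z := by
    rw [mul_assoc, ← commutatorElement_eq_one_iff_mul_comm.1 hxz, inv_mul_cancel_left]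
  have conj_eq : ⁅y, z⁆ * (⁅x, y⁆ * z * ⁅x, y⁆⁻¹) = x * ⁅y, z⁆ * x⁻¹ * z :=
    calc ⁅y, z⁆ * (⁅x, y⁆ * z * ⁅x, y⁆⁻¹) = ⁅x, y⁆ * ⁅y, z⁆ * z * ⁅x, y⁆⁻¹ := by
          rw [← hcomm.eq]; group
      _ = x * y * (x⁻¹ * z * x) * y⁻¹ * x⁻¹ := by simp only [commutatorElement_def]; group
      _ = x * (y * z * y⁻¹ * z⁻¹) * z * x⁻¹ := by rw [hxz]; group
      _ = x * ⁅y, z⁆ * x⁻¹ * (x * z * x⁻¹) := by rw [commutatorElement_def]; group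
      _ = x * ⁅y, z⁆ * x⁻¹ * z := by
          nth_rw 2 [← hxz]; group
  rw [commutatorElement_def ⁅x, y⁆, eq_inv_mul_of_mul_eq conj_eq, commutatorElement_def ⁅y, z⁆⁻¹]
  group

theorem commute_commutatorElement {x y z : G} (hx : Commute x z) (hy : Commute y z) :
    Commute ⁅x, y⁆ z :=
  ((hx.mul_left hy).mul_left hx.inv_left).mul_left hy.inv_left

variable {I L : Type*}

/-- Relations between elements `col i j s`, to be thought of as the elementary matrices with entry
`s` in position `(i, j)` over a ring of characteristic two generated by letters; `s = none` stands
for the entry one. Letters `s` and `t` are required to commute if `stk s ≠ stk t`. -/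
structure SteinbergRel (stk : L → I) (col : Fin 5 → Fin 5 → Option L → G) : Prop where
  mul_self : ∀ i j s, i ≠ j → col i j s * col i j s = 1
  comm_none_left : ∀ i k j s, i ≠ k → k ≠ j → i ≠ j → ⁅col i k none, col k j s⁆ = col i j s
  comm_none_right : ∀ i k j s, i ≠ k → k ≠ j → i ≠ j → ⁅col i k s, col k j none⁆ = col i j s
  comm_eq_one : ∀ i k l j s t, i ≠ k → l ≠ j → j ≠ i → k ≠ l → ⁅col i k s, col l j t⁆ = 1
  comm_pivot : ∀ i k l j s t, i ≠ k → i ≠ l → i ≠ j → k ≠ l → k ≠ j → l ≠ j →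
    ⁅col i k (some s), col k j (some t)⁆ = ⁅col i l (some s), col l j (some t)⁆
  comm_letters : ∀ i k j s t, i ≠ k → i ≠ j → k ≠ j → stk s ≠ stk t →
    ⁅col i k (some s), col k j (some t)⁆ = ⁅col i k (some t), col k j (some s)⁆
  diag : ∀ i s, col i i s = 1

/-- The relations between a family `g`, to be thought of as translations by a vector in each of the
five coordinates, and the elementary matrices `col`. -/
structure IsRow (col : Fin 5 → Fin 5 → Option L → G) (g : Fin 5 → G) : Prop where
  comm_eq_one : ∀ j k l s, k ≠ j → k ≠ l → ⁅g j, col k l s⁆ = 1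
  comm_none : ∀ i j, i ≠ j → ⁅g i, col i j none⁆ = g j

/-- The image of a row under a letter. The choice of the auxiliary coordinate `j + 1` does not
matter by `IsRow.comm_some`. -/
def act (col : Fin 5 → Fin 5 → Option L → G) (s : L) (g : Fin 5 → G) (j : Fin 5) : G :=
  ⁅g (j + 1), col (j + 1) j (some s)⁆

/-- The image of a row under the letters of a word, from left to right. -/
def actWord (col : Fin 5 → Fin 5 → Option L → G) (g : Fin 5 → G) (w : List L) : Fin 5 → G :=
  w.foldl (fun g s => act col s g) g

/-- The entry at `0` of the image of a row under a word, as a group word in the entry `y` at `0`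
of that row: each letter moves the entry to position `1` and back. -/
def zigzag (col : Fin 5 → Fin 5 → Option L → G) (y : G) (w : List L) : G :=
  w.foldl (fun y s => ⁅⁅y, col 0 1 (some s)⁆, col 1 0 none⁆) y

theorem exists_ne_of_fin_five (a b c d : Fin 5) : ∃ m, m ≠ a ∧ m ≠ b ∧ m ≠ c ∧ m ≠ d := by
  revert a b c d; decide

variable {stk : L → I} {col : Fin 5 → Fin 5 → Option L → G} {g : Fin 5 → G}

theorem SteinbergRel.inv_eq_self (hcol : SteinbergRel stk col) {i j : Fin 5} (hij : i ≠ j)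
    (s : Option L) : (col i j s)⁻¹ = col i j s :=
  inv_eq_of_mul_eq_one_right (hcol.mul_self i j s hij)

theorem IsRow.commute (hg : IsRow col g) {j k l : Fin 5} (hkj : k ≠ j) (hkl : k ≠ l)
    (s : Option L) : Commute (g j) (col k l s) :=
  commutatorElement_eq_one_iff_commute.1 (hg.comm_eq_one j k l s hkj hkl)

theorem IsRow.comm_some_eq_inv (hcol : SteinbergRel stk col) (hg : IsRow col g) (s : L)
    {i k j : Fin 5} (hik : i ≠ k) (hij : i ≠ j) (hkj : k ≠ j) :
    ⁅g k, col k j (some s)⁆ = ⁅g i, col i j (some s)⁆⁻¹ := by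
  have hpivot := hcol.comm_none_left i k j (some s) hik hkj hij
  have hrow := hg.comm_none i k hik
  have hrotate := commutatorElement_rotate (hg.comm_eq_one i k j (some s) hik.symm hkj)
    (y := col i k none) (by rw [hpivot, hrow]; exact (hg.commute hik hij _).symm)
  rw [hrow, hpivot, hcol.inv_eq_self hij] at hrotate
  rw [hrotate, commutatorElement_inv]

theorem IsRow.comm_some (hcol : SteinbergRel stk col) (hg : IsRow col g) (s : L) {i j : Fin 5}
    (hij : i ≠ j) : ⁅g i, col i j (some s)⁆ = act col s g j := by
  obtain ⟨p, hpi, hpj', hpj, -⟩ := exists_ne_of_fin_five i (j + 1) j j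
  have hj : j + 1 ≠ j := (by decide : ∀ j : Fin 5, j + 1 ≠ j) j
  rw [act, hg.comm_some_eq_inv hcol s hpi hpj hij, hg.comm_some_eq_inv hcol s hpj' hpj hj]

theorem IsRow.act_inv (hcol : SteinbergRel stk col) (hg : IsRow col g) (s : L) (j : Fin 5) :
    (act col s g j)⁻¹ = act col s g j := by
  obtain ⟨p, hpj, -⟩ := exists_ne_of_fin_five j j j j
  obtain ⟨m, hmj, hmp, -⟩ := exists_ne_of_fin_five j p j j
  have h := hg.comm_some_eq_inv hcol s hmp hmj hpj
  rw [hg.comm_some hcol s hpj, hg.comm_some hcol s hmj] at h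
  exact h.symm

theorem IsRow.act_commute (hcol : SteinbergRel stk col) (hg : IsRow col g) (s : L)
    {j k l : Fin 5} (hkj : k ≠ j) (hkl : k ≠ l) (t : Option L) :
    Commute (act col s g j) (col k l t) := by
  obtain ⟨m, hmj, hmk, hml, -⟩ := exists_ne_of_fin_five j k l l
  rw [← hg.comm_some hcol s hmj]
  exact commute_commutatorElement (hg.commute hmk.symm hkl t)
    (commutatorElement_eq_one_iff_commute.1
      (hcol.comm_eq_one k l m j t (some s) hkl hmj hkj.symm hml.symm)).symm

theorem IsRow.isRow_act (hcol : SteinbergRel stk col) (hg : IsRow col g) (s : L) :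
    IsRow col (act col s g) where
  comm_eq_one j k l t hkj hkl :=
    commutatorElement_eq_one_iff_commute.2 (hg.act_commute hcol s hkj hkl t)
  comm_none i j hij := by
    obtain ⟨m, hmi, hmj, -⟩ := exists_ne_of_fin_five i j j j
    have hpivot := hcol.comm_none_right m i j (some s) hmi hij hmj
    have hrotate := commutatorElement_rotate (hg.comm_eq_one m i j none hmi.symm hij)
      (y := col m i (some s)) (by
        rw [hpivot, hg.comm_some hcol s hmi]
        exact (hg.act_commute hcol s hmi hmj _).symm)
    rw [hpivot, hg.comm_some hcol s hmi] at hrotate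
    rw [hrotate, hcol.inv_eq_self hmj, ← commutatorElement_inv, hg.comm_some hcol s hmj,
      hg.act_inv hcol]

theorem IsRow.act_act (hcol : SteinbergRel stk col) (hg : IsRow col g) (s t : L)
    {i k j : Fin 5} (hik : i ≠ k) (hkj : k ≠ j) (hij : i ≠ j) :
    act col t (act col s g) j = ⁅⁅col i k (some s), col k j (some t)⁆⁻¹, g i⁆ := by
  obtain ⟨p, hpi, hpk, hpj, -⟩ := exists_ne_of_fin_five i k j j
  rw [← (hg.isRow_act hcol s).comm_some hcol t hkj, ← hg.comm_some hcol s hik]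
  refine commutatorElement_rotate (hg.comm_eq_one _ _ _ _ hik.symm hkj) ?_
  rw [hcol.comm_pivot i k p j s t hik hpi.symm hij hpk.symm hkj hpj, hg.comm_some hcol s hik]
  exact commute_commutatorElement (hg.act_commute hcol s hik hpi.symm _).symm
    (hg.act_commute hcol s hpk hpj _).symm

theorem IsRow.act_comm (hcol : SteinbergRel stk col) (hg : IsRow col g) {s t : L}
    (hst : stk s ≠ stk t) :
    act col t (act col s g) = act col s (act col t g) := by
  funext j
  obtain ⟨i, hij, -⟩ := exists_ne_of_fin_five j j j j
  obtain ⟨k, hkj, hki, -⟩ := exists_ne_of_fin_five j i j j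
  rw [hg.act_act hcol s t hki.symm hkj hij, hg.act_act hcol t s hki.symm hkj hij,
    hcol.comm_letters i k j s t hki.symm hij hkj hst]

theorem actWord_cons (s : L) (w : List L) :
    actWord col g (s :: w) = actWord col (act col s g) w := rfl

theorem actWord_append (w w' : List L) :
    actWord col g (w ++ w') = actWord col (actWord col g w) w' := List.foldl_append

theorem IsRow.isRow_actWord (hcol : SteinbergRel stk col) (hg : IsRow col g) (w : List L) :
    IsRow col (actWord col g w) := by
  induction w generalizing g with
  | nil => exact hg
  | cons s _ ih => exact ih (hg.isRow_act hcol s)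

theorem actWord_one (w : List L) : actWord col (1 : Fin 5 → G) w = 1 := by
  have act_one : ∀ s, act col s (1 : Fin 5 → G) = 1 := fun s => by
    funext j
    simp [act]
  induction w with
  | nil => rfl
  | cons s w ih => rw [actWord_cons, act_one, ih]

theorem IsRow.actWord_middle (hcol : SteinbergRel stk col) (hg : IsRow col g) {w : List L}
    (w' : List L) {s : L} (hw : ∀ t ∈ w, stk t ≠ stk s) :
    actWord col g (w ++ s :: w') =
      actWord col g (s :: (w ++ w')) := by
  induction w generalizing g with
  | nil => rfl
  | cons t w ih =>
    rw [List.cons_append, actWord_cons,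
      ih (hg.isRow_act hcol t) fun t' ht' => hw t' (List.mem_cons_of_mem _ ht'), actWord_cons,
      hg.act_comm hcol (hw t List.mem_cons_self)]
    rfl

theorem IsRow.zigzag_eq (hcol : SteinbergRel stk col) (hg : IsRow col g) (w : List L) :
    zigzag col (g 0) w = actWord col g w 0 := by
  induction w generalizing g with
  | nil => rfl
  | cons s w ih =>
    have there_and_back :
        ⁅⁅g 0, col 0 1 (some s)⁆, col 1 0 none⁆ = act col s g 0 := by
      rw [hg.comm_some hcol s (by decide), (hg.isRow_act hcol s).comm_none 1 0 (by decide)]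
    rw [actWord_cons, ← ih (hg.isRow_act hcol s), ← there_and_back]
    rfl

theorem SteinbergRel.eq_one_of_mem_row (hcol : SteinbergRel stk col) {i k j : Fin 5}
    (h : col i k none = 1) (hik : i ≠ k) (hkj : k ≠ j) (hij : i ≠ j) (s : Option L) :
    col i j s = 1 := by
  rw [← hcol.comm_none_left i k j s hik hkj hij, h, commutatorElement_one_left]

theorem SteinbergRel.eq_one_of_mem_col (hcol : SteinbergRel stk col) {i k j : Fin 5}
    (h : col k j none = 1) (hik : i ≠ k) (hkj : k ≠ j) (hij : i ≠ j) (s : Option L) :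
    col i j s = 1 := by
  rw [← hcol.comm_none_right i k j s hik hkj hij, h, commutatorElement_one_right]

theorem SteinbergRel.eq_one (hcol : SteinbergRel stk col) {k l : Fin 5} (hkl : k ≠ l)
    (h : col k l none = 1) (i j : Fin 5) (s : Option L) : col i j s = 1 := by
  rcases eq_or_ne i j with rfl | hij
  · exact hcol.diag i s
  obtain ⟨p, hpk, hpl, hpi, hpj⟩ := exists_ne_of_fin_five k l i j
  have hrow : ∀ t, col k p t = 1 := hcol.eq_one_of_mem_row h hkl hpl.symm hpk.symm
  rcases eq_or_ne i k with rfl | hik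
  · exact hcol.eq_one_of_mem_row (hrow none) hpi.symm hpj hij s
  · have hcolumn := hcol.eq_one_of_mem_col (hrow none) hik hpk.symm hpi.symm none
    exact hcol.eq_one_of_mem_row hcolumn hpi.symm hpj hij s

theorem IsRow.eq_one (hg : IsRow col g) (hcol : ∀ i j s, col i j s = 1) (j : Fin 5) : g j = 1 := by
  obtain ⟨i, hij, -⟩ := exists_ne_of_fin_five j j j j
  rw [← hg.comm_none i j hij, hcol, commutatorElement_one_right]

end Steinberg

section StackWord

variable {G : Type*} [Group G] {I X : Type*} [DecidableEq I]

theorem flatMap_update_of_notMem {l : List I} {k : I} (hk : k ∉ l) (z : I → List X) (t : List X) :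
    (l.flatMap fun k' => (Function.update z k t k').map (k', ·)) =
      l.flatMap fun k' => (z k').map (k', ·) :=
  List.flatMap_congr fun k' hk' => by rw [Function.update_of_ne (ne_of_mem_of_not_mem hk' hk)]

variable [Fintype I]

/-- The contents of a family of stacks as a single word, each letter marked by its stack. -/
noncomputable def stackWord (z : I → List X) : List (I × X) :=
  Finset.univ.toList.flatMap fun k => (z k).map (k, ·)

variable {col : Fin 5 → Fin 5 → Option (I × X) → G} {g : Fin 5 → G}

theorem IsRow.actWord_stackWord_cons (hcol : SteinbergRel Prod.fst col) (hg : IsRow col g) {k : I}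
    {z : I → List X} {a : X} {t : List X} (hz : z k = a :: t) :
    actWord col g (stackWord z) =
      actWord col (act col (k, a) g)
        (stackWord (Function.update z k t)) := by
  obtain ⟨l₁, l₂, hl⟩ := List.append_of_mem (Finset.mem_toList.2 (Finset.mem_univ k))
  have hnodup : (l₁ ++ k :: l₂).Nodup := hl ▸ Finset.nodup_toList _
  have hk : k ∉ l₁ ++ l₂ := (List.nodup_middle.1 hnodup).notMem
  rw [List.mem_append, not_or] at hk
  simp only [stackWord, hl, List.flatMap_append, List.flatMap_cons, flatMap_update_of_notMem hk.1,
    flatMap_update_of_notMem hk.2, Function.update_self, hz, List.map_cons, List.cons_append]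
  rw [hg.actWord_middle hcol, actWord_cons]
  intro s hs
  obtain ⟨k', hk', hs⟩ := List.mem_flatMap.1 hs
  obtain ⟨a', -, rfl⟩ := List.mem_map.1 hs
  exact ne_of_mem_of_not_mem hk' hk.1

theorem IsRow.actWord_stackWord_append (hcol : SteinbergRel Prod.fst col) (hg : IsRow col g)
    (k : I) (z : I → List X) (w t : List X) :
    actWord col g (stackWord (Function.update z k (w ++ t))) =
      actWord col (actWord col g (w.map (k, ·)))
        (stackWord (Function.update z k t)) := by
  induction w generalizing g with
  | nil => rfl
  | cons a w ih =>
    rw [List.cons_append, hg.actWord_stackWord_cons hcol (Function.update_self k (a :: (w ++ t)) z),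
      Function.update_idem, ih (hg.isRow_act hcol _)]
    rfl

end StackWord

section Rules

/-- The letters of the machine `M` with a history stack, which has the index `none` and records
the transitions made; it makes the computation reversible. -/
abbrev Letter (Q K A : Type*) := Option K × (A ⊕ (Q × A))

variable {Q K A : Type*}

/-- The contents `S` of the stacks together with the contents `h` of the history stack. -/
def withHistory (S : K → List A) (h : List (Q × A)) : Option K → List (A ⊕ (Q × A))
  | none => h.map Sum.inr
  | some k => (S k).map Sum.inl

namespace StackMachine

/-- The letter popped in state `q` when the top of the stack is `a`. -/
def ruleSource (M : StackMachine Q K A) (q : Q) (a : A) : List (Letter Q K A) :=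
  [(some (M.stack q), Sum.inl a)]

/-- The letters pushed in state `q` when the top of the stack is `a`. -/
def ruleTarget (M : StackMachine Q K A) (q : Q) (a : A) : List (Letter Q K A) :=
  (M.trans q a).2.map (fun b => (some (M.stack q), Sum.inl b)) ++ [(none, Sum.inr (q, a))]

/-- The word of the initial stacks on input `n`. -/
noncomputable def inputWord [Fintype K] (M : StackMachine Q K A) (n : ℕ) : List (Letter Q K A) :=
  List.replicate n (some M.input, Sum.inl M.unit) ++ stackWord (withHistory M.base [])

end StackMachine

variable {G : Type*} [Group G]

/-- The relations under which the row attached to a state, acted on by the letters on the stacks,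
is an invariant of the computation that is trivial at acceptance. -/
structure RuleRel (M : StackMachine Q K A) (row : Q → Fin 5 → G)
    (col : Fin 5 → Fin 5 → Option (Letter Q K A) → G) : Prop where
  steinberg : SteinbergRel Prod.fst col
  isRow : ∀ q, IsRow col (row q)
  rule : ∀ q a, q ≠ M.accept → q ≠ M.reject → ∀ j,
    actWord col (row q) (M.ruleSource q a) j =
      actWord col (row (M.trans q a).1) (M.ruleTarget q a) j
  accept : ∀ j, row M.accept j = 1

section

variable [DecidableEq K]

theorem withHistory_update_some (S : K → List A) (h : List (Q × A)) (k : K) (l : List A) :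
    withHistory (Function.update S k l) h =
      Function.update (withHistory S h) (some k) (l.map Sum.inl) := by
  funext k'
  rcases k' with - | k'
  · rfl
  · rcases eq_or_ne k' k with rfl | hk
    · simp only [withHistory, Function.update_self]
    · rw [Function.update_of_ne (Option.some_injective K |>.ne hk)]
      simp only [withHistory, Function.update_of_ne hk]

theorem withHistory_update_none (S : K → List A) (h h' : List (Q × A)) :
    Function.update (withHistory S h) none (h'.map Sum.inr) = withHistory S h' := by
  funext k
  cases k <;> rfl

end

variable [Fintype K] {M : StackMachine Q K A} {row : Q → Fin 5 → G}
  {col : Fin 5 → Fin 5 → Option (Letter Q K A) → G} {g : Fin 5 → G}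

theorem IsRow.actWord_push_history (hcol : SteinbergRel Prod.fst col) (hg : IsRow col g)
    (S : K → List A) (x : Q × A) (h : List (Q × A)) :
    actWord col g (stackWord (withHistory S (x :: h))) =
      actWord col (actWord col g [(none, Sum.inr x)]) (stackWord (withHistory S h)) := by
  classical
  rw [hg.actWord_stackWord_cons hcol (k := none) (a := Sum.inr x) (t := h.map Sum.inr) rfl,
    withHistory_update_none]
  rfl

variable [DecidableEq K]

theorem IsRow.actWord_pop (hcol : SteinbergRel Prod.fst col) (hg : IsRow col g) {S : K → List A}
    {k : K} {a : A} {t : List A} (hS : S k = a :: t) (h : List (Q × A)) :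
    actWord col g (stackWord (withHistory S h)) =
      actWord col (actWord col g [(some k, Sum.inl a)])
        (stackWord (withHistory (Function.update S k t) h)) := by
  rw [hg.actWord_stackWord_cons hcol (k := some k) (a := Sum.inl a) (t := t.map Sum.inl)
    (congrArg (List.map Sum.inl) hS), withHistory_update_some]
  rfl

theorem IsRow.actWord_push (hcol : SteinbergRel Prod.fst col) (hg : IsRow col g) (S : K → List A)
    (k : K) (w t : List A) (h : List (Q × A)) :
    actWord col g (stackWord (withHistory (Function.update S k (w ++ t)) h)) =
      actWord col (actWord col g (w.map fun b => (some k, Sum.inl b)))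
        (stackWord (withHistory (Function.update S k t) h)) := by
  rw [withHistory_update_some, List.map_append, hg.actWord_stackWord_append hcol, List.map_map,
    ← withHistory_update_some]
  rfl

theorem IsRow.actWord_init (hcol : SteinbergRel Prod.fst col) (hg : IsRow col g) (n : ℕ) :
    actWord col g (stackWord (withHistory (M.init n).2 [])) = actWord col g (M.inputWord n) := by
  rw [StackMachine.init, hg.actWord_push hcol, Function.update_eq_self, List.map_replicate,
    ← actWord_append]
  rfl

theorem RuleRel.exists_history_of_step (hrel : RuleRel M row col) {c d : Q × (K → List A)}
    (hstep : M.Step c d) (h : List (Q × A)) :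
    ∃ h', actWord col (row c.1) (stackWord (withHistory c.2 h)) =
      actWord col (row d.1) (stackWord (withHistory d.2 h')) := by
  obtain ⟨q, S⟩ := c
  obtain ⟨haccept, hreject, a, t, hpop, rfl⟩ := hstep
  have hrow := hrel.isRow (M.trans q a).1
  have hrule : actWord col (row q) (M.ruleSource q a) =
      actWord col (actWord col (row (M.trans q a).1)
        ((M.trans q a).2.map fun b => (some (M.stack q), Sum.inl b))) [(none, Sum.inr (q, a))] := by
    rw [← actWord_append]
    exact funext (hrel.rule q a haccept hreject)
  refine ⟨(q, a) :: h, ?_⟩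
  rw [(hrel.isRow q).actWord_pop hrel.steinberg hpop, hrow.actWord_push hrel.steinberg,
    (hrow.isRow_actWord hrel.steinberg _).actWord_push_history hrel.steinberg]
  exact congrArg (actWord col · _) hrule

theorem RuleRel.exists_history_of_reaches (hrel : RuleRel M row col) {n : ℕ}
    {d : Q × (K → List A)} (hd : M.Reaches (M.init n) d) :
    ∃ h, actWord col (row M.start) (M.inputWord n) =
      actWord col (row d.1) (stackWord (withHistory d.2 h)) := by
  induction hd with
  | refl => exact ⟨[], ((hrel.isRow M.start).actWord_init hrel.steinberg n).symm⟩
  | tail _ hstep ih =>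
    obtain ⟨h, ih⟩ := ih
    obtain ⟨h', hh'⟩ := hrel.exists_history_of_step hstep h
    exact ⟨h', ih.trans hh'⟩

theorem RuleRel.zigzag_eq_one_of_accepts (hrel : RuleRel M row col) {n : ℕ} (hn : M.Accepts n) :
    zigzag col (row M.start 0) (M.inputWord n) = 1 := by
  obtain ⟨S, hS⟩ := hn
  obtain ⟨h, hh⟩ := hrel.exists_history_of_reaches hS
  rw [(hrel.isRow M.start).zigzag_eq hrel.steinberg, hh,
    show row M.accept = 1 from funext hrel.accept, actWord_one]
  rfl

end Rules

section Cube

/-- The eight points on which the alternating group glued to the machine acts. -/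
abbrev Cube := ZMod 2 × ZMod 2 × ZMod 2

/-- Translation of the cube in the first coordinate. -/
def cubeShiftFst : alternatingGroup Cube :=
  ⟨Equiv.addRight (1, 0, 0), by rw [Equiv.Perm.mem_alternatingGroup]; decide +kernel⟩

/-- Translation of the cube in the second coordinate. -/
def cubeShiftSnd : alternatingGroup Cube :=
  ⟨Equiv.addRight (0, 1, 0), by rw [Equiv.Perm.mem_alternatingGroup]; decide +kernel⟩

/-- The permutation of the cube adding the first coordinate to the third. -/
def cubeShear : alternatingGroup Cube :=
  ⟨Function.Involutive.toPerm (fun x => (x.1, x.2.1, x.2.2 + x.1))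
    (by unfold Function.Involutive; decide), by
    rw [Equiv.Perm.mem_alternatingGroup]; decide +kernel⟩

theorem monoidHom_alternatingGroup_cube_eq_one {G : Type*} [Group G]
    {f : alternatingGroup Cube →* G}
    (hf : ∀ x, f x = f (cubeShear * x * cubeShear⁻¹)) (x : alternatingGroup Cube) : f x = 1 := by
  have : IsSimpleGroup (alternatingGroup Cube) :=
    alternatingGroup.isSimpleGroup (by simp [Nat.card_eq_fintype_card])
  have hker : f.ker ≠ ⊥ := fun hbot => by
    have hcomm := (MonoidHom.ker_eq_bot_iff f).1 hbot (hf cubeShiftFst)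
    have happly := congrArg (fun x : alternatingGroup Cube => (x : Equiv.Perm Cube) 0) hcomm
    revert happly
    decide
  exact (f.normal_ker.eq_bot_or_eq_top.resolve_left hker).ge (Subgroup.mem_top x)

end Cube

section MachineGroup

/-- The generators of the group attached to a machine: rows of all states, elementary matrices, a
copy of the alternating group of the cube, and an element `test` that gets related to the input. -/
inductive Gen (Q K A : Type*)
  | row (q : Q) (j : Fin 5)
  | col (i j : Fin 5) (s : Option (Letter Q K A))
  | alt (x : alternatingGroup Cube)
  | test

variable {Q K A : Type*}

instance [Finite Q] [Finite K] [Finite A] : Finite (Gen Q K A) := by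
  let toSum : Gen Q K A → ((Q × Fin 5) ⊕ (Fin 5 × Fin 5 × Option (Letter Q K A))) ⊕
      Option (alternatingGroup Cube)
    | .row q j => .inl (.inl (q, j))
    | .col i j s => .inl (.inr (i, j, s))
    | .alt x => .inr (some x)
    | .test => .inr none
  refine Finite.of_injective toSum ?_
  rintro (_ | _ | _ | _) (_ | _ | _ | _) h <;> simp_all [toSum]

variable {G : Type*} [Group G]

/-- The relations of the group attached to a machine that do not depend on the input. -/
structure MachineGroupBaseRel (M : StackMachine Q K A) (d : Gen Q K A → G) : Prop where
  ruleRel : RuleRel M (fun q j => d (.row q j)) (fun i j s => d (.col i j s))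
  alt_mul : ∀ x y, d (.alt (x * y)) = d (.alt x) * d (.alt y)
  alt_shift : d (.alt cubeShiftSnd) = d (.col 1 2 none)
  test_conj : ∀ x, d .test * d (.alt x) * (d .test)⁻¹ = d (.alt (cubeShear * x * cubeShear⁻¹))

/-- The relations of the group attached to a machine and the word `w` of an input. If `test` is
trivial then, as the alternating group of the cube is simple, everything is. -/
structure MachineGroupRel (M : StackMachine Q K A) (w : List (Letter Q K A))
    (d : Gen Q K A → G) : Prop extends MachineGroupBaseRel M d where
  test_eq : d .test = zigzag (fun i j s => d (.col i j s)) (d (.row M.start 0)) w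

theorem MachineGroupRel.eq_one {M : StackMachine Q K A} {w : List (Letter Q K A)}
    {d : Gen Q K A → G} (hrel : MachineGroupRel M w d) (htest : d .test = 1) (x : Gen Q K A) :
    d x = 1 := by
  have halt : ∀ x, d (.alt x) = 1 :=
    monoidHom_alternatingGroup_cube_eq_one (f := MonoidHom.mk' (fun x => d (.alt x)) hrel.alt_mul)
      fun x => by simpa [htest] using hrel.test_conj x
  have hcol : ∀ i j s, d (.col i j s) = 1 :=
    hrel.ruleRel.steinberg.eq_one (by decide : (1 : Fin 5) ≠ 2) (hrel.alt_shift ▸ halt _)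
  cases x with
  | row q j => exact (hrel.ruleRel.isRow q).eq_one hcol j
  | col i j s => exact hcol i j s
  | alt x => exact halt x
  | test => exact htest

theorem MachineGroupRel.eq_one_of_accepts [Fintype K] [DecidableEq K] {M : StackMachine Q K A}
    {n : ℕ} {d : Gen Q K A → G} (hrel : MachineGroupRel M (M.inputWord n) d) (hn : M.Accepts n)
    (x : Gen Q K A) : d x = 1 :=
  hrel.eq_one (hrel.test_eq.trans (hrel.ruleRel.zigzag_eq_one_of_accepts hn)) x

end MachineGroup

section FinitelyRelated

theorem freeGroup_lift_map {X Y G : Type*} [Group G] (f : X → Y) (d : Y → G) (r : FreeGroup X) :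
    FreeGroup.lift d (FreeGroup.map f r) = FreeGroup.lift (d ∘ f) r :=
  DFunLike.congr_fun (FreeGroup.ext_hom ((FreeGroup.lift d).comp (FreeGroup.map f))
    (FreeGroup.lift (d ∘ f)) fun x => by simp) r

variable {X Y : Type}

/-- A condition on families indexed by `X` of elements of groups that is expressed by finitely many
relators. -/
def IsFinitelyRelated (P : (G : Type) → [Group G] → (X → G) → Prop) : Prop :=
  ∃ R : List (FreeGroup X), ∀ (G : Type) [Group G] (d : X → G),
    P G d ↔ ∀ r ∈ R, FreeGroup.lift d r = 1

namespace IsFinitelyRelated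

variable {P P' : (G : Type) → [Group G] → (X → G) → Prop}

theorem of_iff (h : IsFinitelyRelated P)
    (hiff : ∀ (G : Type) [Group G] (d : X → G), P' G d ↔ P G d) : IsFinitelyRelated P' := by
  obtain ⟨R, hR⟩ := h
  exact ⟨R, fun G _ d => (hiff G d).trans (hR G d)⟩

theorem and (h : IsFinitelyRelated P) (h' : IsFinitelyRelated P') :
    IsFinitelyRelated fun G _ d => P G d ∧ P' G d := by
  obtain ⟨R, hR⟩ := h
  obtain ⟨R', hR'⟩ := h'
  exact ⟨R ++ R', fun G _ d => by simp only [hR, hR', List.forall_mem_append]⟩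

theorem all {ι : Type} [Finite ι] {P : ι → (G : Type) → [Group G] → (X → G) → Prop}
    (h : ∀ i, IsFinitelyRelated (P i)) : IsFinitelyRelated fun G _ d => ∀ i, P i G d := by
  choose R hR using h
  have := Fintype.ofFinite ι
  refine ⟨Finset.univ.toList.flatMap R, fun G _ d => ?_⟩
  simp only [hR, List.mem_flatMap, Finset.mem_toList, Finset.mem_univ, true_and]
  exact ⟨fun h r ⟨i, hi⟩ => h i r hi, fun h i r hr => h r ⟨i, hr⟩⟩

theorem imp {p : Prop} (h : p → IsFinitelyRelated P) :
    IsFinitelyRelated fun G _ d => p → P G d := by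
  by_cases hp : p
  · exact (h hp).of_iff fun G _ d => by simp only [hp, true_imp_iff]
  · exact ⟨[], fun G _ d => by simp [hp]⟩

theorem eq {a b : (G : Type) → [Group G] → (X → G) → G}
    (ha : ∀ (G : Type) [Group G] (d : X → G),
      FreeGroup.lift d (a (FreeGroup X) FreeGroup.of) = a G d)
    (hb : ∀ (G : Type) [Group G] (d : X → G),
      FreeGroup.lift d (b (FreeGroup X) FreeGroup.of) = b G d) :
    IsFinitelyRelated fun G _ d => a G d = b G d :=
  ⟨[a (FreeGroup X) FreeGroup.of * (b (FreeGroup X) FreeGroup.of)⁻¹], fun G _ d => by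
    simp [ha, hb, mul_inv_eq_one]⟩

theorem comp (h : IsFinitelyRelated P) (f : X → Y) :
    IsFinitelyRelated fun G _ (d : Y → G) => P G (d ∘ f) := by
  obtain ⟨R, hR⟩ := h
  refine ⟨R.map (FreeGroup.map f), fun G _ d => ?_⟩
  simp only [hR, List.forall_mem_map, freeGroup_lift_map]

theorem map (h : IsFinitelyRelated P) {G H : Type} [Group G] [Group H] (f : G →* H) {d : X → G}
    (hd : P G d) : P H (f ∘ d) := by
  obtain ⟨R, hR⟩ := h
  have lift_comp : FreeGroup.lift (f ∘ d) = f.comp (FreeGroup.lift d) :=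
    FreeGroup.ext_hom _ _ fun x => by simp
  rw [hR, lift_comp]
  exact fun r hr => by rw [MonoidHom.comp_apply, (hR G d).1 hd r hr, map_one]

end IsFinitelyRelated

end FinitelyRelated

section MachineRelators

open scoped commutatorElement

theorem map_actWord {G H L : Type*} [Group G] [Group H] (f : G →* H)
    (col : Fin 5 → Fin 5 → Option L → G) (g : Fin 5 → G) (w : List L) (j : Fin 5) :
    f (actWord col g w j) = actWord (fun i j s => f (col i j s)) (fun j => f (g j)) w j := by
  induction w generalizing g with
  | nil => rfl
  | cons s w ih =>
    have map_act : (fun j => f (act col s g j)) =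
        act (fun i j s => f (col i j s)) s fun j => f (g j) :=
      funext fun j => map_commutatorElement f _ _
    rw [actWord_cons, actWord_cons, ih, map_act]

theorem map_zigzag {G H L : Type*} [Group G] [Group H] (f : G →* H)
    (col : Fin 5 → Fin 5 → Option L → G) (y : G) (w : List L) :
    f (zigzag col y w) = zigzag (fun i j s => f (col i j s)) (f y) w := by
  induction w generalizing y with
  | nil => rfl
  | cons s w ih =>
    simp only [zigzag, List.foldl_cons] at ih ⊢
    simp only [ih, map_commutatorElement]

variable {X I L Q K A : Type}

theorem isFinitelyRelated_steinbergRel [Finite L] (stk : L → I)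
    (x : Fin 5 → Fin 5 → Option L → X) :
    IsFinitelyRelated fun _ _ d => SteinbergRel stk fun i j s => d (x i j s) := by
  refine .of_iff (.and ?_ <| .and ?_ <| .and ?_ <| .and ?_ <| .and ?_ <| .and ?_ ?_)
    fun _ _ _ => ⟨fun ⟨h₁, h₂, h₃, h₄, h₅, h₆, h₇⟩ => ⟨h₁, h₂, h₃, h₄, h₅, h₆, h₇⟩,
      fun ⟨h₁, h₂, h₃, h₄, h₅, h₆, h₇⟩ => ⟨h₁, h₂, h₃, h₄, h₅, h₆, h₇⟩⟩
  all_goals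
    repeat' first
      | refine .all fun _ => ?_
      | refine .imp fun _ => ?_
    exact .eq (fun _ _ _ => by simp [map_commutatorElement])
      fun _ _ _ => by simp [map_commutatorElement]

theorem isFinitelyRelated_isRow [Finite L] (x : Fin 5 → Fin 5 → Option L → X) (y : Fin 5 → X) :
    IsFinitelyRelated fun _ _ d => IsRow (fun i j s => d (x i j s)) fun j => d (y j) := by
  refine .of_iff (.and ?_ ?_) fun _ _ _ => ⟨fun ⟨h₁, h₂⟩ => ⟨h₁, h₂⟩, fun ⟨h₁, h₂⟩ => ⟨h₁, h₂⟩⟩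
  all_goals
    repeat' first
      | refine .all fun _ => ?_
      | refine .imp fun _ => ?_
    exact .eq (fun _ _ _ => by simp [map_commutatorElement]) fun _ _ _ => by simp

theorem isFinitelyRelated_ruleRel [Finite Q] [Finite K] [Finite A] (M : StackMachine Q K A)
    (y : Q → Fin 5 → X) (x : Fin 5 → Fin 5 → Option (Letter Q K A) → X) :
    IsFinitelyRelated fun _ _ d =>
      RuleRel M (fun q j => d (y q j)) fun i j s => d (x i j s) := by
  refine .of_iff (.and (isFinitelyRelated_steinbergRel Prod.fst x) <|
    .and (.all fun q => isFinitelyRelated_isRow x (y q)) <| .and ?_ ?_)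
    fun _ _ _ => ⟨fun ⟨h₁, h₂, h₃, h₄⟩ => ⟨h₁, h₂, h₃, h₄⟩,
      fun ⟨h₁, h₂, h₃, h₄⟩ => ⟨h₁, h₂, h₃, h₄⟩⟩
  · exact .all fun q => .all fun a => .imp fun _ => .imp fun _ => .all fun j =>
      .eq (fun _ _ _ => by simp [map_actWord]) fun _ _ _ => by simp [map_actWord]
  · exact .all fun j => .eq (fun _ _ _ => by simp) fun _ _ _ => by simp

theorem isFinitelyRelated_machineGroupBaseRel [Finite Q] [Finite K] [Finite A]
    (M : StackMachine Q K A) :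
    IsFinitelyRelated fun _ _ (d : Gen Q K A → _) => MachineGroupBaseRel M d := by
  refine .of_iff (.and (isFinitelyRelated_ruleRel M Gen.row Gen.col) <| .and ?_ <| .and ?_ ?_)
    fun _ _ _ => ⟨fun ⟨h₁, h₂, h₃, h₄⟩ => ⟨h₁, h₂, h₃, h₄⟩,
      fun ⟨h₁, h₂, h₃, h₄⟩ => ⟨h₁, h₂, h₃, h₄⟩⟩
  · exact .all fun x => .all fun y => .eq (fun _ _ _ => by simp) fun _ _ _ => by simp
  · exact .eq (fun _ _ _ => by simp) fun _ _ _ => by simp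
  · exact .all fun x => .eq (fun _ _ _ => by simp) fun _ _ _ => by simp

theorem MachineGroupRel.map {Q K A G H : Type} [Finite Q] [Finite K] [Finite A] [Group G] [Group H]
    {M : StackMachine Q K A} {w : List (Letter Q K A)} {d : Gen Q K A → G}
    (h : MachineGroupRel M w d) (f : G →* H) : MachineGroupRel M w (f ∘ d) where
  toMachineGroupBaseRel :=
    (isFinitelyRelated_machineGroupBaseRel M).map f h.toMachineGroupBaseRel
  test_eq := (congrArg f h.test_eq).trans (map_zigzag f _ _ w)

end MachineRelators

section Words

open scoped commutatorElement

variable {X L : Type*}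

/-- The commutator of two words in the generators `X` and their inverses. -/
def commutatorWord (v w : List (X × Bool)) : List (X × Bool) :=
  v ++ w ++ FreeGroup.invRev v ++ FreeGroup.invRev w

/-- The counterpart of `zigzag` for words in the generators and their inverses. -/
def zigzagWord (x : Fin 5 → Fin 5 → Option L → X) (v : List (X × Bool)) (w : List L) :
    List (X × Bool) :=
  w.foldl (fun v s => commutatorWord (commutatorWord v [(x 0 1 (some s), true)])
    [(x 1 0 none, true)]) v

theorem mk_commutatorWord (v w : List (X × Bool)) :
    FreeGroup.mk (commutatorWord v w) = ⁅FreeGroup.mk v, FreeGroup.mk w⁆ := by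
  simp only [commutatorWord, commutatorElement_def, FreeGroup.inv_mk, FreeGroup.mul_mk]

theorem mk_zigzagWord (x : Fin 5 → Fin 5 → Option L → X) (v : List (X × Bool)) (w : List L) :
    FreeGroup.mk (zigzagWord x v w) =
      zigzag (fun i j s => FreeGroup.of (x i j s)) (FreeGroup.mk v) w := by
  induction w generalizing v with
  | nil => rfl
  | cons s w ih =>
    simp only [zigzagWord, zigzag, List.foldl_cons] at ih ⊢
    rw [ih, mk_commutatorWord, mk_commutatorWord]
    rfl

theorem primrec_commutatorWord [Primcodable X] :
    Primrec₂ (commutatorWord : List (X × Bool) → List (X × Bool) → List (X × Bool)) := by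
  have hinv : Primrec (FreeGroup.invRev : List (X × Bool) → List (X × Bool)) :=
    Primrec.list_reverse.comp (Primrec.list_map Primrec.id
      (Primrec.pair (Primrec.fst.comp Primrec.snd)
        (Primrec.not.comp (Primrec.snd.comp Primrec.snd))))
  exact Primrec.list_append.comp (Primrec.list_append.comp (Primrec.list_append.comp
    Primrec.fst Primrec.snd) (hinv.comp Primrec.fst)) (hinv.comp Primrec.snd)

theorem primrec_zigzagWord [Primcodable X] [Primcodable L] [Finite L]
    (x : Fin 5 → Fin 5 → Option L → X) (v : List (X × Bool)) :
    Primrec fun w : List L => zigzagWord x v w := by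
  have hletter : Primrec fun s : L => [(x 0 1 (some s), true)] := Primrec.dom_finite _
  exact Primrec.list_foldl Primrec.id (Primrec.const v)
    (primrec_commutatorWord.comp (primrec_commutatorWord.comp (Primrec.fst.comp Primrec.snd)
      (hletter.comp (Primrec.snd.comp Primrec.snd))) (Primrec.const _)).to₂

theorem primrec_list_replicate {α : Type*} [Primcodable α] (a : α) :
    Primrec fun n => List.replicate n a :=
  (Primrec.list_map Primrec.list_range (Primrec.const a).to₂).of_eq fun n => by simp

theorem StackMachine.primrec_inputWord {Q K A : Type*} [Fintype K] [Primcodable (Letter Q K A)]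
    (M : StackMachine Q K A) : Primrec M.inputWord :=
  Primrec.list_append.comp (primrec_list_replicate _) (Primrec.const _)

end Words

section Presentation

variable {X : Type}

theorem exists_surjective_presentedGroup_iff {X G : Type*} [Group G] {rels : Set (FreeGroup X)} :
    (∃ φ : PresentedGroup rels →* G, Function.Surjective φ) ↔
      ∃ d : X → G, (∀ r ∈ rels, FreeGroup.lift d r = 1) ∧
        Subgroup.closure (Set.range d) = ⊤ := by
  have closure_eq_top (φ : PresentedGroup rels →* G) :
      Subgroup.closure (Set.range (φ ∘ PresentedGroup.of)) = ⊤ ↔ Function.Surjective φ := by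
    rw [Set.range_comp, ← MonoidHom.map_closure, PresentedGroup.closure_range_of,
      ← MonoidHom.range_eq_map, MonoidHom.range_eq_top]
  constructor
  · rintro ⟨φ, hφ⟩
    refine ⟨φ ∘ PresentedGroup.of, fun r hr => ?_, (closure_eq_top φ).2 hφ⟩
    have lift_eq : FreeGroup.lift (φ ∘ PresentedGroup.of) = φ.comp (PresentedGroup.mk rels) :=
      FreeGroup.ext_hom _ _ fun x => FreeGroup.lift_apply_of
    rw [lift_eq, MonoidHom.comp_apply, PresentedGroup.one_of_mem hr, map_one]
  · rintro ⟨d, hd, hclosure⟩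
    refine ⟨PresentedGroup.toGroup hd, (closure_eq_top _).1 ?_⟩
    rwa [show PresentedGroup.toGroup hd ∘ PresentedGroup.of = d from
      funext fun x => PresentedGroup.toGroup.of hd]

theorem exists_surjective_presentedGroupOf_iff {s : ℕ} {L : List (List (Fin s × Bool))}
    {G : Type*} [Group G] :
    (∃ φ : presentedGroupOf ⟨s, L⟩ →* G, Function.Surjective φ) ↔
      ∃ d : Fin s → G, (∀ w ∈ L, FreeGroup.lift d (FreeGroup.mk w) = 1) ∧
        Subgroup.closure (Set.range d) = ⊤ :=
  exists_surjective_presentedGroup_iff.trans <| exists_congr fun _ => and_congr_left fun _ =>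
    ⟨fun h w hw => h _ ⟨w, hw, rfl⟩, fun h _ ⟨w, hw, hr⟩ => hr ▸ h w hw⟩

theorem exists_computable_presentation [Finite X] [Primcodable X]
    {P : (G : Type) → [Group G] → (X → G) → Prop} (hP : IsFinitelyRelated P)
    {w : ℕ → List (X × Bool)} (hw : Primrec w) :
    ∃ R : ℕ → Σ s : ℕ, List (List (Fin s × Bool)), Computable R ∧ ∀ n (G : Type) [Group G],
      (∃ φ : presentedGroupOf (R n) →* G, Function.Surjective φ) ↔
        ∃ d : X → G, (P G d ∧ FreeGroup.lift d (FreeGroup.mk (w n)) = 1) ∧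
          Subgroup.closure (Set.range d) = ⊤ := by
  classical
  obtain ⟨s, ⟨e⟩⟩ := Finite.exists_equiv_fin X
  obtain ⟨R, hR⟩ := hP
  let relators (n : ℕ) : List (List (Fin s × Bool)) :=
    ((w n).map (Prod.map e id)) :: R.map fun r => (FreeGroup.map e r).toWord
  have relators_iff (n : ℕ) {G : Type} [Group G] (d : Fin s → G) :
      (∀ v ∈ relators n, FreeGroup.lift d (FreeGroup.mk v) = 1) ↔
        P G (d ∘ e) ∧ FreeGroup.lift (d ∘ e) (FreeGroup.mk (w n)) = 1 := by
    have mk_map : FreeGroup.mk ((w n).map (Prod.map e id)) = FreeGroup.map e (FreeGroup.mk (w n)) :=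
      rfl
    simp only [relators, List.forall_mem_cons, List.forall_mem_map, FreeGroup.mk_toWord, mk_map,
      freeGroup_lift_map, hR, and_comm]
  have hletter : Primrec (Prod.map e id : X × Bool → Fin s × Bool) := Primrec.dom_finite _
  refine ⟨fun n => ⟨s, relators n⟩, computable_sigmaMk (Primrec.list_cons.comp
    (Primrec.list_map hw (hletter.comp Primrec.snd).to₂) (Primrec.const _)).to_comp,
    fun n G _ => ?_⟩
  rw [exists_surjective_presentedGroupOf_iff]
  refine (e.arrowCongr (Equiv.refl G)).symm.exists_congr fun d => ?_
  rw [relators_iff, ← e.surjective.range_comp d]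
  rfl

/-- The generator `none` is subject to no relation. -/
theorem exists_computable_machineGroup {Q K A : Type} [Finite Q] [Fintype K] [Finite A]
    (M : StackMachine Q K A) :
    ∃ R : ℕ → Σ s : ℕ, List (List (Fin s × Bool)), Computable R ∧ ∀ n (G : Type) [Group G],
      (∃ φ : presentedGroupOf (R n) →* G, Function.Surjective φ) ↔
        ∃ d : Option (Gen Q K A) → G, MachineGroupRel M (M.inputWord n) (d ∘ some) ∧
          Subgroup.closure (Set.range d) = ⊤ := by
  obtain ⟨_, ⟨eGen⟩⟩ := Finite.exists_equiv_fin (Option (Gen Q K A))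
  obtain ⟨_, ⟨eLetter⟩⟩ := Finite.exists_equiv_fin (Letter Q K A)
  let := Primcodable.ofEquiv _ eGen
  let := Primcodable.ofEquiv _ eLetter
  let testWord (n : ℕ) : List (Option (Gen Q K A) × Bool) := (some .test, false) ::
    zigzagWord (fun i j s => some (.col i j s)) [(some (.row M.start 0), true)] (M.inputWord n)
  have primrec_testWord : Primrec testWord := Primrec.list_cons.comp (Primrec.const _)
    ((primrec_zigzagWord _ _).comp M.primrec_inputWord)
  obtain ⟨R, hR, hsurj⟩ := exists_computable_presentation
    ((isFinitelyRelated_machineGroupBaseRel M).comp some) primrec_testWord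
  refine ⟨R, hR, fun n G _ => (hsurj n G).trans <| exists_congr fun d => and_congr_left fun _ => ?_⟩
  have mk_testWord : FreeGroup.mk (testWord n) = (FreeGroup.of (some .test))⁻¹ *
      zigzag (fun i j s => FreeGroup.of (some (.col i j s)))
        (FreeGroup.of (some (.row M.start 0))) (M.inputWord n) :=
    congrArg ((FreeGroup.of (some Gen.test))⁻¹ * ·)
      (mk_zigzagWord (fun i j s => some (Gen.col i j s)) [(some (.row M.start 0), true)]
        (M.inputWord n))
  rw [mk_testWord, map_mul, map_inv, inv_mul_eq_one, map_zigzag]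
  simp only [FreeGroup.lift_apply_of]
  exact ⟨fun ⟨hbase, htest⟩ => ⟨hbase, htest⟩, fun h => ⟨h.toMachineGroupBaseRel, h.test_eq⟩⟩

theorem isCyclic_of_accepts {Q K A G : Type*} [Fintype K] [DecidableEq K] [Group G]
    {M : StackMachine Q K A} {n : ℕ} {d : Option (Gen Q K A) → G}
    (hrel : MachineGroupRel M (M.inputWord n) (d ∘ some))
    (hclosure : Subgroup.closure (Set.range d) = ⊤) (hn : M.Accepts n) : IsCyclic G := by
  refine isCyclic_iff_exists_zpowers_eq_top.2 ⟨d none, top_le_iff.1 (hclosure ▸ ?_)⟩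
  rw [Subgroup.closure_le]
  rintro _ ⟨- | x, rfl⟩
  · exact Subgroup.mem_zpowers _
  · rw [show d (some x) = 1 from hrel.eq_one_of_accepts hn x]
    exact one_mem _

end Presentation

section Push

variable {I X : Type*} [DecidableEq I]

/-- The stacks after pushing a letter. -/
def push (s : I × X) (z : I → List X) : I → List X :=
  Function.update z s.1 (s.2 :: z s.1)

/-- The stacks after pushing the letters of a word, from right to left. -/
def pushWord (w : List (I × X)) (z : I → List X) : I → List X :=
  w.foldr push z

theorem push_comm {s t : I × X} (hst : s.1 ≠ t.1) (z : I → List X) :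
    push s (push t z) = push t (push s z) := by
  simp only [push, Function.update_of_ne hst, Function.update_of_ne hst.symm,
    Function.update_comm hst]

theorem push_injective (s : I × X) : Function.Injective (push s) := by
  intro z z' h
  funext k
  have hk := congrFun h k
  rcases eq_or_ne k s.1 with rfl | hne
  · simpa only [push, Function.update_self, List.cons.injEq, true_and] using hk
  · simpa only [push, Function.update_of_ne hne] using hk

theorem pushWord_injective (w : List (I × X)) : Function.Injective (pushWord w) := by
  induction w with
  | nil => exact Function.injective_id
  | cons s w ih => exact (push_injective s).comp ih

theorem pushWord_append (w w' : List (I × X)) (z : I → List X) :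
    pushWord (w ++ w') z = pushWord w (pushWord w' z) := List.foldr_append

theorem pushWord_map_mk (k : I) (l : List X) (z : I → List X) :
    pushWord (l.map (k, ·)) z = Function.update z k (l ++ z k) := by
  induction l with
  | nil => exact (Function.update_eq_self k z).symm
  | cons a l ih =>
    change push (k, a) (pushWord (l.map (k, ·)) z) = _
    rw [ih, push, Function.update_self, Function.update_idem, List.cons_append]

theorem pushWord_stackWord [Fintype I] (y : I → List X) :
    pushWord (stackWord y) (fun _ => []) = y := by
  have pushWord_flatMap (l : List I) (hl : l.Nodup) (k : I) :
      pushWord (l.flatMap fun k => (y k).map (k, ·)) (fun _ => []) k =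
        if k ∈ l then y k else [] := by
    induction l with
    | nil => rfl
    | cons k' l ih =>
      obtain ⟨hk', hl'⟩ := List.nodup_cons.1 hl
      rw [List.flatMap_cons, pushWord_append, pushWord_map_mk]
      rcases eq_or_ne k k' with rfl | hk
      · rw [Function.update_self, ih hl', if_neg hk', if_pos List.mem_cons_self, List.append_nil]
      · rw [Function.update_of_ne hk, ih hl']
        simp only [List.mem_cons, hk, false_or]
  funext k
  rw [stackWord, pushWord_flatMap _ (Finset.nodup_toList _), if_pos (by simp)]

end Push

section DeterministicRelation

variable {α : Type*} {r : α → α → Prop} {a b c : α}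

theorem eq_of_reflTransGen_of_forall_not (hb : ∀ e, ¬r b e)
    (h : Relation.ReflTransGen r b c) : c = b :=
  (Relation.ReflTransGen.cases_head h).elim Eq.symm fun ⟨e, he, _⟩ => absurd he (hb e)

theorem eq_of_reflTransGen_of_rightUnique (hr : Relator.RightUnique r) (hb : ∀ e, ¬r b e)
    (hc : ∀ e, ¬r c e) (hab : Relation.ReflTransGen r a b) (hac : Relation.ReflTransGen r a c) :
    c = b :=
  (Relation.ReflTransGen.total_of_right_unique hr hab hac).elim
    (eq_of_reflTransGen_of_forall_not hb) fun h => (eq_of_reflTransGen_of_forall_not hc h).symm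

theorem finite_setOf_reflTransGen (hr : Relator.RightUnique r) (hb : ∀ e, ¬r b e)
    (hab : Relation.ReflTransGen r a b) : {e | Relation.ReflTransGen r a e}.Finite := by
  induction hab using Relation.ReflTransGen.head_induction_on with
  | refl => exact (Set.finite_singleton b).subset fun _ => eq_of_reflTransGen_of_forall_not hb
  | @head a a' hstep _ ih =>
    refine (ih.insert a).subset fun e he => ?_
    obtain rfl | ⟨a'', hstep', he⟩ := Relation.ReflTransGen.cases_head he
    · exact Set.mem_insert _ _
    · exact Set.mem_insert_of_mem _ (hr hstep hstep' ▸ he)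

end DeterministicRelation

section HistoryStep

variable {Q K A : Type*} [DecidableEq K] {M : StackMachine Q K A}

namespace StackMachine

/-- The computation steps of the machine with a history stack. -/
def HistoryStep (M : StackMachine Q K A) (c d : Q × (Option K → List (A ⊕ (Q × A)))) : Prop :=
  ∃ q a z, q ≠ M.accept ∧ q ≠ M.reject ∧ c = (q, pushWord (M.ruleSource q a) z) ∧
    d = ((M.trans q a).1, pushWord (M.ruleTarget q a) z)

/-- Reachability for the machine with a history stack. -/
def HistoryReaches (M : StackMachine Q K A) :
    Q × (Option K → List (A ⊕ (Q × A))) → Q × (Option K → List (A ⊕ (Q × A))) → Prop :=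
  Relation.ReflTransGen M.HistoryStep

theorem pushWord_ruleSource (M : StackMachine Q K A) (q : Q) (a : A)
    (z : Option K → List (A ⊕ (Q × A))) : pushWord (M.ruleSource q a) z =
      Function.update z (some (M.stack q)) (Sum.inl a :: z (some (M.stack q))) := rfl

theorem pushWord_ruleTarget (M : StackMachine Q K A) (q : Q) (a : A)
    (z : Option K → List (A ⊕ (Q × A))) :
    pushWord (M.ruleTarget q a) z = Function.update (push (none, Sum.inr (q, a)) z)
      (some (M.stack q)) ((M.trans q a).2.map Sum.inl ++ z (some (M.stack q))) := by
  have hmap := pushWord_map_mk (some (M.stack q)) ((M.trans q a).2.map (Sum.inl (β := Q × A)))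
    (push (none, Sum.inr (q, a)) z)
  rw [List.map_map] at hmap
  rw [ruleTarget, pushWord_append]
  exact hmap.trans (by simp [push])

theorem pushWord_ruleTarget_none (M : StackMachine Q K A) (q : Q) (a : A)
    (z : Option K → List (A ⊕ (Q × A))) :
    pushWord (M.ruleTarget q a) z none = Sum.inr (q, a) :: z none := by
  simp [pushWord_ruleTarget, push]

theorem rightUnique_historyStep (M : StackMachine Q K A) : Relator.RightUnique M.HistoryStep := by
  rintro _ _ _ ⟨q, a, z, -, -, rfl, rfl⟩ ⟨q', a', z', -, -, hpop, rfl⟩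
  obtain ⟨rfl, hpop⟩ := Prod.ext_iff.1 hpop
  have htop := congrFun hpop (some (M.stack q))
  obtain rfl : a = a' := by
    simp only [pushWord_ruleSource, Function.update_self, List.cons.injEq, Sum.inl.injEq] at htop
    exact htop.1
  rw [pushWord_injective _ hpop]

/-- The top of the history stack determines the rule that led to a configuration. -/
theorem historyReaches_rule_iff {c : Q × (Option K → List (A ⊕ (Q × A)))} (hc : c.2 none = [])
    {q : Q} (haccept : q ≠ M.accept) (hreject : q ≠ M.reject) (a : A)
    (z : Option K → List (A ⊕ (Q × A))) :
    M.HistoryReaches c (q, pushWord (M.ruleSource q a) z) ↔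
      M.HistoryReaches c ((M.trans q a).1, pushWord (M.ruleTarget q a) z) := by
  refine ⟨fun h => h.tail ⟨q, a, z, haccept, hreject, rfl, rfl⟩, fun h => ?_⟩
  obtain rfl | ⟨_, hb, q', a', z', -, -, rfl, heq⟩ := Relation.ReflTransGen.cases_tail h
  · exact absurd ((M.pushWord_ruleTarget_none q a z).symm.trans hc) (List.cons_ne_nil _ _)
  · obtain ⟨-, hstacks⟩ := Prod.ext_iff.1 heq
    have htop := congrFun hstacks none
    simp only [pushWord_ruleTarget_none, List.cons.injEq, Sum.inr.injEq, Prod.mk.injEq] at htop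
    obtain ⟨⟨rfl, rfl⟩, -⟩ := htop
    rwa [pushWord_injective _ hstacks]

theorem Step.historyStep {c d : Q × (K → List A)} (hstep : M.Step c d) (h : List (Q × A)) :
    ∃ h', M.HistoryStep (c.1, withHistory c.2 h) (d.1, withHistory d.2 h') := by
  obtain ⟨q, S⟩ := c
  obtain ⟨haccept, hreject, a, t, hpop, rfl⟩ := hstep
  refine ⟨(q, a) :: h, q, a, withHistory (Function.update S (M.stack q) t) h, haccept,
    hreject, congrArg (Prod.mk q) ?_, congrArg (Prod.mk _) ?_⟩
  · dsimp only at hpop ⊢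
    rw [pushWord_ruleSource, withHistory_update_some, Function.update_idem, Function.update_self,
      ← List.map_cons, ← withHistory_update_some, ← hpop, Function.update_eq_self]
  · have push_history (S : K → List A) : push (none, Sum.inr (q, a)) (withHistory S h) =
        withHistory S ((q, a) :: h) := withHistory_update_none S h ((q, a) :: h)
    rw [pushWord_ruleTarget, push_history]
    simp only [withHistory_update_some, Function.update_self, Function.update_idem,
      List.map_append]

theorem Reaches.historyReaches {c d : Q × (K → List A)} (h : M.Reaches c d) :
    ∃ l, M.HistoryReaches (c.1, withHistory c.2 []) (d.1, withHistory d.2 l) := by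
  induction h with
  | refl => exact ⟨[], .refl⟩
  | tail _ hstep ih =>
    obtain ⟨l, ih⟩ := ih
    obtain ⟨l', hl'⟩ := hstep.historyStep l
    exact ⟨l', ih.tail hl'⟩

theorem pushWord_inputWord [Fintype K] (M : StackMachine Q K A) (n : ℕ) :
    pushWord (M.inputWord n) (fun _ => []) = withHistory (M.init n).2 [] := by
  rw [inputWord, pushWord_append, pushWord_stackWord, init, withHistory_update_some,
    ← List.map_replicate (f := fun x => (some M.input, x)), pushWord_map_mk, List.map_append,
    List.map_replicate]
  rfl

end StackMachine

end HistoryStep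

section LinearModel

universe u

/-- The action of a word on a vector, each letter `s` acting by `T s`. -/
def evalWord {L V : Type*} (T : L → V → V) (x : V) (w : List L) : V :=
  w.foldl (fun x s => T s x) x

/-- The `F₂`-valued functions vanishing outside of a set. -/
def functionsSupportedOn {α : Type*} (D : Set α) : Submodule (ZMod 2) (α → ZMod 2) :=
  Submodule.pi Dᶜ fun _ => ⊥

theorem finite_functionsSupportedOn {α : Type*} {D : Set α} (hD : D.Finite) :
    Finite (functionsSupportedOn D) := by
  have : Finite D := hD
  refine Finite.of_injective (fun (f : functionsSupportedOn D) (x : D) => f.1 x) fun f g h => ?_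
  ext x
  by_cases hx : x ∈ D
  · exact congrFun h ⟨x, hx⟩
  · rw [f.2 x hx, g.2 x hx]

section BoundedStacks

variable {I X : Type*}

/-- The stacks of height at most `B`. -/
def boundedStacks (I X : Type*) (B : ℕ) : Set (I → List X) :=
  {z | ∀ k, (z k).length ≤ B}

theorem finite_boundedStacks [Finite I] [Finite X] (B : ℕ) : (boundedStacks I X B).Finite :=
  (Set.Finite.pi fun _ => List.finite_length_le X B).subset fun _ hz k _ => hz k

theorem exists_subset_boundedStacks [Finite I] {s : Set (I → List X)} (hs : s.Finite) :
    ∃ B, s ⊆ boundedStacks I X B := by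
  obtain ⟨B, hB⟩ := ((hs.prod Set.finite_univ).image
    fun p : (I → List X) × I => (p.1 p.2).length).bddAbove
  exact ⟨B, fun z hz k => hB ⟨(z, k), ⟨hz, Set.mem_univ k⟩, rfl⟩⟩

theorem mem_boundedStacks_of_push [DecidableEq I] {B : ℕ} {s : I × X} {z : I → List X}
    (h : push s z ∈ boundedStacks I X B) : z ∈ boundedStacks I X B := by
  intro k
  refine le_trans ?_ (h k)
  rcases eq_or_ne k s.1 with rfl | hk
  · simp only [push, Function.update_self, List.length_cons, Nat.le_succ]
  · simp only [push, Function.update_of_ne hk, le_refl]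

/-- Composition with `push s`: the value at some stacks becomes the value after pushing `s`. -/
def letterMap [DecidableEq I] (B : ℕ) (s : I × X) :
    functionsSupportedOn (boundedStacks I X B) →ₗ[ZMod 2]
      functionsSupportedOn (boundedStacks I X B) :=
  (LinearMap.funLeft (ZMod 2) (ZMod 2) (push s)).restrict
    fun _ hf _ hz => hf _ fun h => hz (mem_boundedStacks_of_push h)

theorem evalWord_letterMap_apply [DecidableEq I] {B : ℕ} (w : List (I × X))
    (f : functionsSupportedOn (boundedStacks I X B)) (z : I → List X) :
    (evalWord (fun s => letterMap B s) f w).1 z = f.1 (pushWord w z) := by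
  induction w generalizing f with
  | nil => rfl
  | cons s _ ih => exact ih (letterMap B s f)

end BoundedStacks

variable {Q K A : Type*}

/-- A vector for each state and a linear map for each letter such that the vector of a state, acted
on by the letters on the stacks, is an invariant of the computation that vanishes at acceptance. -/
structure LinearModel (M : StackMachine Q K A) (V : Type*) [AddCommGroup V]
    [Module (ZMod 2) V] where
  letter : Letter Q K A → V →ₗ[ZMod 2] V
  vec : Q → V
  letter_comm : ∀ s t, s.1 ≠ t.1 → ∀ x, letter s (letter t x) = letter t (letter s x)
  rule : ∀ q a, q ≠ M.accept → q ≠ M.reject →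
    evalWord (fun s => letter s) (vec q) (M.ruleSource q a) =
      evalWord (fun s => letter s) (vec (M.trans q a).1) (M.ruleTarget q a)
  accept : vec M.accept = 0

section

variable [DecidableEq K] {M : StackMachine Q K A}

namespace StackMachine

theorem not_historyStep_accept (M : StackMachine Q K A) (z : Option K → List (A ⊕ (Q × A))) :
    ∀ d, ¬M.HistoryStep (M.accept, z) d :=
  fun _ ⟨_, _, _, haccept, _, heq, _⟩ => haccept (congrArg Prod.fst heq).symm

theorem not_historyStep_reject (M : StackMachine Q K A) (z : Option K → List (A ⊕ (Q × A))) :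
    ∀ d, ¬M.HistoryStep (M.reject, z) d :=
  fun _ ⟨_, _, _, _, hreject, heq, _⟩ => hreject (congrArg Prod.fst heq).symm

end StackMachine

open Classical in
/-- The linear model on functions of the stacks, in which a state is represented by the indicator
of the stacks with which it is reachable. -/
noncomputable def LinearModel.ofReachable {c : Q × (Option K → List (A ⊕ (Q × A)))} {B : ℕ}
    (hc : c.2 none = [])
    (hB : ∀ q z, M.HistoryReaches c (q, z) → z ∈ boundedStacks (Option K) (A ⊕ (Q × A)) B)
    (haccept : ∀ z, ¬M.HistoryReaches c (M.accept, z)) :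
    LinearModel M (functionsSupportedOn (boundedStacks (Option K) (A ⊕ (Q × A)) B)) where
  letter := letterMap B
  vec q := ⟨fun z => if M.HistoryReaches c (q, z) then 1 else 0,
    fun z hz => if_neg fun h => hz (hB q z h)⟩
  letter_comm s t hst f := Subtype.ext <| funext fun z => congrArg f.1 (push_comm hst.symm z)
  rule q a hq hq' := Subtype.ext <| funext fun z => by
    simp only [evalWord_letterMap_apply, StackMachine.historyReaches_rule_iff hc hq hq' a z]
  accept := Subtype.ext <| funext fun z => if_neg (haccept z)

theorem StackMachine.Rejects.exists_linearModel {Q K A : Type u} [Finite Q] [Fintype K]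
    [Finite A] [DecidableEq K] {M : StackMachine Q K A} {n : ℕ} (hM : M.accept ≠ M.reject)
    (hn : M.Rejects n) :
    ∃ (V : Type u) (_ : AddCommGroup V) (_ : Module (ZMod 2) V) (_ : Finite V)
      (m : LinearModel M V),
      evalWord (fun s => m.letter s) (m.vec M.start) (M.inputWord n) ≠ 0 := by
  obtain ⟨S, hS⟩ := hn
  obtain ⟨l, hrun⟩ := hS.historyReaches
  set c := (M.start, withHistory (M.init n).2 [])
  have hfin : {d | M.HistoryReaches c d}.Finite :=
    finite_setOf_reflTransGen M.rightUnique_historyStep (M.not_historyStep_reject _) hrun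
  obtain ⟨B, hB⟩ := exists_subset_boundedStacks (hfin.image Prod.snd)
  have haccept (z) : ¬M.HistoryReaches c (M.accept, z) := fun h =>
    hM (congrArg Prod.fst (eq_of_reflTransGen_of_rightUnique M.rightUnique_historyStep
      (M.not_historyStep_reject _) (M.not_historyStep_accept z) hrun h))
  refine ⟨_, _, _, finite_functionsSupportedOn (finite_boundedStacks B),
    .ofReachable (c := c) rfl (fun q z h => hB ⟨(q, z), h, rfl⟩) haccept, fun h => ?_⟩
  have h_empty := congrFun (congrArg Subtype.val h) fun _ => []
  refine one_ne_zero (α := ZMod 2) (.trans ?_ h_empty)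
  refine .trans ?_ (evalWord_letterMap_apply _ _ _).symm
  rw [StackMachine.pushWord_inputWord]
  exact (if_pos .refl).symm

end

end LinearModel

section OnePlus

open scoped commutatorElement

variable {W : Type*} [AddCommGroup W] [Module (ZMod 2) W]

/-- The permutation `1 + N` attached to a linear map `N` of square zero over `F₂`. -/
def onePlus (N : W →ₗ[ZMod 2] W) (hN : N ∘ₗ N = 0) : Equiv.Perm W :=
  Function.Involutive.toPerm (fun x => x + N x) fun x => by
    have hNx : N (N x) = 0 := LinearMap.congr_fun hN x
    change x + N x + N (x + N x) = x
    rw [map_add, hNx, add_zero, add_assoc, ZModModule.add_self, add_zero]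

theorem onePlus_apply (N : W →ₗ[ZMod 2] W) (hN : N ∘ₗ N = 0) (x : W) :
    onePlus N hN x = x + N x := rfl

theorem onePlus_inv (N : W →ₗ[ZMod 2] W) (hN : N ∘ₗ N = 0) :
    (onePlus N hN)⁻¹ = onePlus N hN := rfl

theorem onePlus_mul_self (N : W →ₗ[ZMod 2] W) (hN : N ∘ₗ N = 0) :
    onePlus N hN * onePlus N hN = 1 :=
  mul_eq_one_iff_eq_inv.2 rfl

theorem onePlus_zero (h : (0 : W →ₗ[ZMod 2] W) ∘ₗ 0 = 0) : onePlus 0 h = 1 :=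
  Equiv.ext fun x => add_zero x

theorem comp_comp_self_of_comp_eq_zero {N P : W →ₗ[ZMod 2] W} (hNP : N ∘ₗ P = 0) :
    (P ∘ₗ N) ∘ₗ (P ∘ₗ N) = 0 := by
  rw [LinearMap.comp_assoc, ← LinearMap.comp_assoc N, hNP, LinearMap.zero_comp,
    LinearMap.comp_zero]

theorem commutatorElement_onePlus {N P : W →ₗ[ZMod 2] W} (hN : N ∘ₗ N = 0) (hP : P ∘ₗ P = 0)
    (hNP : N ∘ₗ P = 0) :
    ⁅onePlus N hN, onePlus P hP⁆ = onePlus (P ∘ₗ N) (comp_comp_self_of_comp_eq_zero hNP) := by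
  ext x
  have hN' (x) : N (N x) = 0 := LinearMap.congr_fun hN x
  have hP' (x) : P (P x) = 0 := LinearMap.congr_fun hP x
  have hNP' (x) : N (P x) = 0 := LinearMap.congr_fun hNP x
  simp only [commutatorElement_def, onePlus_inv, Equiv.Perm.mul_apply, onePlus_apply, map_add, hN',
    hP', hNP', LinearMap.comp_apply, add_zero]
  calc x + P x + N x + (P x + P (N x)) + N x
      = x + P (N x) + (N x + N x) + (P x + P x) := by abel
    _ = x + P (N x) := by rw [ZModModule.add_self, ZModModule.add_self, add_zero, add_zero]

theorem commutatorElement_onePlus_eq_one {N P : W →ₗ[ZMod 2] W} (hN : N ∘ₗ N = 0)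
    (hP : P ∘ₗ P = 0) (hNP : N ∘ₗ P = 0) (hPN : P ∘ₗ N = 0) :
    ⁅onePlus N hN, onePlus P hP⁆ = 1 := by
  simp only [commutatorElement_onePlus hN hP hNP, hPN, onePlus_zero]

end OnePlus

section ModelSpace

open scoped commutatorElement

/-- The space of the permutation model: a scalar and a vector in each of the five coordinates. -/
abbrev ModelSpace (V : Type*) := ZMod 2 × (Fin 5 → V)

variable {V : Type*} [AddCommGroup V] [Module (ZMod 2) V]

/-- The linear map placing in coordinate `j` the multiple of `v` by the scalar. -/
def rowMap (v : V) (j : Fin 5) : ModelSpace V →ₗ[ZMod 2] ModelSpace V :=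
  .inr _ _ _ ∘ₗ .single _ _ j ∘ₗ .toSpanSingleton _ _ v ∘ₗ .fst _ _ _

/-- The linear map placing in coordinate `j` the image under `T` of coordinate `i`. -/
def colMap (i j : Fin 5) (T : V →ₗ[ZMod 2] V) : ModelSpace V →ₗ[ZMod 2] ModelSpace V :=
  .inr _ _ _ ∘ₗ .single _ (fun _ => V) j ∘ₗ T ∘ₗ .proj i ∘ₗ .snd _ _ _

theorem rowMap_apply (v : V) (j : Fin 5) (p : ModelSpace V) :
    rowMap v j p = (0, Pi.single j (p.1 • v)) := rfl

theorem colMap_apply (i j : Fin 5) (T : V →ₗ[ZMod 2] V) (p : ModelSpace V) :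
    colMap i j T p = (0, Pi.single j (T (p.2 i))) := rfl

theorem rowMap_comp_rowMap (v w : V) (j k : Fin 5) : rowMap v j ∘ₗ rowMap w k = 0 :=
  LinearMap.ext fun p => by simp [rowMap_apply]

theorem rowMap_comp_colMap (v : V) (i j k : Fin 5) (T : V →ₗ[ZMod 2] V) :
    rowMap v j ∘ₗ colMap i k T = 0 :=
  LinearMap.ext fun p => by simp [rowMap_apply, colMap_apply]

theorem colMap_comp_rowMap (v : V) (i j : Fin 5) (T : V →ₗ[ZMod 2] V) :
    colMap i j T ∘ₗ rowMap v i = rowMap (T v) j :=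
  LinearMap.ext fun p => by simp [rowMap_apply, colMap_apply]

theorem colMap_comp_rowMap_of_ne {i k : Fin 5} (hik : i ≠ k) (v : V) (j : Fin 5)
    (T : V →ₗ[ZMod 2] V) : colMap i j T ∘ₗ rowMap v k = 0 :=
  LinearMap.ext fun p => by simp [rowMap_apply, colMap_apply, hik]

theorem colMap_comp_colMap (i j k : Fin 5) (S T : V →ₗ[ZMod 2] V) :
    colMap k j T ∘ₗ colMap i k S = colMap i j (T ∘ₗ S) :=
  LinearMap.ext fun p => by simp [colMap_apply]

theorem colMap_comp_colMap_of_ne {i l : Fin 5} (hil : i ≠ l) (j k : Fin 5)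
    (S T : V →ₗ[ZMod 2] V) : colMap i j T ∘ₗ colMap k l S = 0 :=
  LinearMap.ext fun p => by simp [colMap_apply, hil]

/-- The permutation of the model space corresponding to a row. -/
def rowPerm (v : V) (j : Fin 5) : Equiv.Perm (ModelSpace V) :=
  onePlus (rowMap v j) (rowMap_comp_rowMap v v j j)

/-- The permutation of the model space corresponding to an elementary matrix, with the convention
that it is trivial in diagonal positions. -/
def colPerm (i j : Fin 5) (T : V →ₗ[ZMod 2] V) : Equiv.Perm (ModelSpace V) :=
  if hij : i = j then 1 else onePlus (colMap i j T) (colMap_comp_colMap_of_ne hij j i T T)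

theorem colPerm_of_ne {i j : Fin 5} (hij : i ≠ j) (T : V →ₗ[ZMod 2] V) :
    colPerm i j T = onePlus (colMap i j T) (colMap_comp_colMap_of_ne hij j i T T) :=
  dif_neg hij

theorem rowPerm_apply (v : V) (j : Fin 5) (p : ModelSpace V) :
    rowPerm v j p = p + (0, Pi.single j (p.1 • v)) := rfl

theorem colPerm_apply {i j : Fin 5} (hij : i ≠ j) (T : V →ₗ[ZMod 2] V) (p : ModelSpace V) :
    colPerm i j T p = p + (0, Pi.single j (T (p.2 i))) := by
  rw [colPerm_of_ne hij]
  rfl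

theorem rowPerm_mul_self (v : V) (j : Fin 5) : rowPerm v j * rowPerm v j = 1 :=
  onePlus_mul_self _ _

theorem rowPerm_zero (j : Fin 5) : rowPerm (0 : V) j = 1 :=
  Equiv.ext fun p => by simp [rowPerm_apply]

theorem commutatorElement_rowPerm_colPerm {i j : Fin 5} (hij : i ≠ j) (v : V)
    (T : V →ₗ[ZMod 2] V) : ⁅rowPerm v i, colPerm i j T⁆ = rowPerm (T v) j := by
  rw [colPerm_of_ne hij, rowPerm, commutatorElement_onePlus _ _ (rowMap_comp_colMap v i i j T)]
  simp only [colMap_comp_rowMap, rowPerm]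

theorem commutatorElement_rowPerm_colPerm_of_ne {j k l : Fin 5} (hkj : k ≠ j) (hkl : k ≠ l) (v : V)
    (T : V →ₗ[ZMod 2] V) : ⁅rowPerm v j, colPerm k l T⁆ = 1 := by
  rw [colPerm_of_ne hkl]
  exact commutatorElement_onePlus_eq_one _ _ (rowMap_comp_colMap v k j l T)
    (colMap_comp_rowMap_of_ne hkj v l T)

theorem commutatorElement_colPerm {i k j : Fin 5} (hik : i ≠ k) (hkj : k ≠ j) (hij : i ≠ j)
    (S T : V →ₗ[ZMod 2] V) : ⁅colPerm i k S, colPerm k j T⁆ = colPerm i j (T ∘ₗ S) := by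
  rw [colPerm_of_ne hik, colPerm_of_ne hkj, colPerm_of_ne hij,
    commutatorElement_onePlus _ _ (colMap_comp_colMap_of_ne hij _ _ _ _)]
  simp only [colMap_comp_colMap]

theorem commutatorElement_colPerm_of_ne {i k l j : Fin 5} (hik : i ≠ k) (hlj : l ≠ j)
    (hji : j ≠ i) (hkl : k ≠ l) (S T : V →ₗ[ZMod 2] V) : ⁅colPerm i k S, colPerm l j T⁆ = 1 := by
  rw [colPerm_of_ne hik, colPerm_of_ne hlj]
  exact commutatorElement_onePlus_eq_one _ _ (colMap_comp_colMap_of_ne hji.symm _ _ _ _)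
    (colMap_comp_colMap_of_ne hkl.symm _ _ _ _)

end ModelSpace

section CubeAction

variable {V : Type*} [AddCommGroup V] [Module (ZMod 2) V]

/-- The translation by an element of the cube, attached to a vector `v`: its coordinates are
added to the scalar, to the multiple of coordinate `1` in coordinate `2`, and to the multiple of
`v` in coordinate `0`. -/
def cubeTranslate (v : V) (e : Cube) (p : ModelSpace V) : ModelSpace V :=
  (p.1 + e.1, p.2 + Pi.single 2 (e.2.1 • p.2 1) + Pi.single 0 (e.2.2 • v))

theorem cubeTranslate_snd_one (v : V) (e : Cube) (p : ModelSpace V) :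
    (cubeTranslate v e p).2 1 = p.2 1 := by
  simp [cubeTranslate]

theorem cubeTranslate_zero (v : V) (p : ModelSpace V) : cubeTranslate v 0 p = p := by
  simp [cubeTranslate]

theorem cubeTranslate_add (v : V) (e e' : Cube) (p : ModelSpace V) :
    cubeTranslate v (e + e') p = cubeTranslate v e (cubeTranslate v e' p) := by
  refine Prod.ext ?_ ?_
  · simp only [cubeTranslate, Prod.fst_add]
    ring
  · change _ = (cubeTranslate v e' p).2 + Pi.single 2 (e.2.1 • (cubeTranslate v e' p).2 1) +
      Pi.single 0 (e.2.2 • v)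
    rw [cubeTranslate_snd_one]
    simp only [cubeTranslate, Prod.snd_add, Prod.fst_add, add_smul, Pi.single_add]
    abel

theorem exists_dual_apply_eq_one_of_ne_zero (x : V) :
    ∃ f : Module.Dual (ZMod 2) V, x ≠ 0 → f x = 1 := by
  rcases eq_or_ne x 0 with rfl | hx
  · exact ⟨0, fun h => absurd rfl h⟩
  · exact (Module.Projective.exists_dual_eq_one (ZMod 2) hx).imp fun _ hf _ => hf

/-- A functional taking the value one at `x`, unless `x = 0`. -/
noncomputable def dualVec (x : V) : Module.Dual (ZMod 2) V :=
  (exists_dual_apply_eq_one_of_ne_zero x).choose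

theorem dualVec_apply_self {x : V} (hx : x ≠ 0) : dualVec x x = 1 :=
  (exists_dual_apply_eq_one_of_ne_zero x).choose_spec hx

/-- Coordinates on the orbits of the translations by the cube. -/
noncomputable def cubeCoord (v : V) (p : ModelSpace V) : Cube :=
  (p.1, dualVec (p.2 1) (p.2 2), dualVec v (p.2 0))

theorem cubeCoord_cubeTranslate {v : V} (hv : v ≠ 0) (e : Cube) {p : ModelSpace V}
    (hp : p.2 1 ≠ 0) : cubeCoord v (cubeTranslate v e p) = cubeCoord v p + e := by
  rw [cubeCoord, cubeTranslate_snd_one]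
  simp [cubeTranslate, cubeCoord, Prod.ext_iff, dualVec_apply_self hv, dualVec_apply_self hp]

open Classical in
/-- The action of a permutation of the cube on the orbits of the translations by the cube, trivial
where coordinate `1` vanishes since the translations do not act freely there. -/
noncomputable def cubeSMul (v : V) (π : Equiv.Perm Cube) (p : ModelSpace V) : ModelSpace V :=
  if p.2 1 = 0 then p else cubeTranslate v (π (cubeCoord v p) - cubeCoord v p) p

theorem cubeSMul_of_eq_zero (v : V) (π : Equiv.Perm Cube) {p : ModelSpace V} (hp : p.2 1 = 0) :
    cubeSMul v π p = p := if_pos hp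

theorem cubeSMul_of_ne_zero (v : V) (π : Equiv.Perm Cube) {p : ModelSpace V} (hp : p.2 1 ≠ 0) :
    cubeSMul v π p = cubeTranslate v (π (cubeCoord v p) - cubeCoord v p) p := if_neg hp

theorem cubeSMul_snd_one (v : V) (π : Equiv.Perm Cube) (p : ModelSpace V) :
    (cubeSMul v π p).2 1 = p.2 1 := by
  by_cases hp : p.2 1 = 0
  · rw [cubeSMul_of_eq_zero v π hp]
  · rw [cubeSMul_of_ne_zero v π hp, cubeTranslate_snd_one]

theorem cubeSMul_one (v : V) (p : ModelSpace V) : cubeSMul v 1 p = p := by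
  by_cases hp : p.2 1 = 0
  · exact cubeSMul_of_eq_zero v 1 hp
  · rw [cubeSMul_of_ne_zero v 1 hp, Equiv.Perm.one_apply, sub_self, cubeTranslate_zero]

theorem cubeSMul_mul {v : V} (hv : v ≠ 0) (π σ : Equiv.Perm Cube) (p : ModelSpace V) :
    cubeSMul v (π * σ) p = cubeSMul v π (cubeSMul v σ p) := by
  by_cases hp : p.2 1 = 0
  · simp only [cubeSMul_of_eq_zero v _ hp]
  · have hp' : (cubeTranslate v (σ (cubeCoord v p) - cubeCoord v p) p).2 1 ≠ 0 := by
      rwa [cubeTranslate_snd_one]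
    rw [cubeSMul_of_ne_zero v σ hp, cubeSMul_of_ne_zero v _ hp, cubeSMul_of_ne_zero v _ hp',
      cubeCoord_cubeTranslate hv _ hp, ← cubeTranslate_add, Equiv.Perm.mul_apply,
      add_sub_cancel, sub_add_sub_cancel]

/-- The action of the permutations of the cube on the model space. -/
noncomputable def cubePerm {v : V} (hv : v ≠ 0) :
    Equiv.Perm Cube →* Equiv.Perm (ModelSpace V) :=
  letI : MulAction (Equiv.Perm Cube) (ModelSpace V) :=
    { smul := cubeSMul v, one_smul := cubeSMul_one v, mul_smul := cubeSMul_mul hv }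
  MulAction.toPermHom _ _

theorem cubePerm_apply {v : V} (hv : v ≠ 0) (π : Equiv.Perm Cube) (p : ModelSpace V) :
    cubePerm hv π p = cubeSMul v π p := rfl

theorem cubePerm_cubeShiftSnd {v : V} (hv : v ≠ 0) :
    cubePerm hv cubeShiftSnd = colPerm 1 2 LinearMap.id := by
  ext1 p
  rw [cubePerm_apply, colPerm_apply (by decide), LinearMap.id_apply]
  by_cases hp : p.2 1 = 0
  · rw [cubeSMul_of_eq_zero v _ hp, hp, Pi.single_zero]
    exact (add_zero p).symm
  · have shift_sub (x : Cube) : (cubeShiftSnd : Equiv.Perm Cube) x - x = (0, 1, 0) :=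
      add_sub_cancel_left x _
    rw [cubeSMul_of_ne_zero v _ hp, shift_sub]
    simp [cubeTranslate, Prod.ext_iff]

theorem rowPerm_apply_eq_cubeSMul (v : V) {p : ModelSpace V} (hp : p.2 1 ≠ 0) :
    rowPerm v 0 p = cubeSMul v cubeShear p := by
  have shear_sub : ∀ x : Cube, (cubeShear : Equiv.Perm Cube) x - x = (0, 0, x.1) := by decide
  rw [cubeSMul_of_ne_zero v _ hp, shear_sub, rowPerm_apply]
  simp [cubeTranslate, cubeCoord, Prod.ext_iff]

theorem rowPerm_conj_cubePerm {v : V} (hv : v ≠ 0) (π : Equiv.Perm Cube) :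
    rowPerm v 0 * cubePerm hv π * (rowPerm v 0)⁻¹ =
      cubePerm hv (cubeShear * π * (cubeShear : Equiv.Perm Cube)⁻¹) := by
  rw [mul_inv_eq_iff_eq_mul]
  ext1 p
  simp only [Equiv.Perm.mul_apply, cubePerm_apply]
  by_cases hp : p.2 1 = 0
  · have hp' : (rowPerm v 0 p).2 1 = 0 := by simpa [rowPerm_apply] using hp
    rw [cubeSMul_of_eq_zero v _ hp, cubeSMul_of_eq_zero v _ hp']
  · have hp' : (cubeSMul v π p).2 1 ≠ 0 := by rwa [cubeSMul_snd_one]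
    rw [rowPerm_apply_eq_cubeSMul v hp, rowPerm_apply_eq_cubeSMul v hp', ← cubeSMul_mul hv,
      ← cubeSMul_mul hv, inv_mul_cancel_right]

end CubeAction

section PermutationModel

open scoped commutatorElement

variable {Q K A V : Type*} [AddCommGroup V] [Module (ZMod 2) V] {M : StackMachine Q K A}

/-- The linear map of an optional letter, where `none` stands for the identity. -/
def letterOrId {L : Type*} (T : L → V →ₗ[ZMod 2] V) : Option L → V →ₗ[ZMod 2] V
  | none => LinearMap.id
  | some s => T s

theorem actWord_rowPerm {L : Type*} (T : L → V →ₗ[ZMod 2] V) (v : V) (w : List L) :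
    actWord (fun i j s => colPerm i j (letterOrId T s)) (rowPerm v) w =
      rowPerm (evalWord (fun s => T s) v w) := by
  induction w generalizing v with
  | nil => rfl
  | cons s w ih =>
    have act_rowPerm : act (fun i j s => colPerm i j (letterOrId T s)) s (rowPerm v) =
        rowPerm (T s v) :=
      funext fun j => commutatorElement_rowPerm_colPerm ((by decide : ∀ j : Fin 5, j + 1 ≠ j) j) v _
    refine .trans ?_ (ih (T s v))
    rw [← act_rowPerm]
    rfl

theorem isRow_rowPerm {L : Type*} (T : L → V →ₗ[ZMod 2] V) (v : V) :
    IsRow (fun i j s => colPerm i j (letterOrId T s)) (rowPerm v) where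
  comm_eq_one _ _ _ _ hkj hkl := commutatorElement_rowPerm_colPerm_of_ne hkj hkl v _
  comm_none _ _ hij := commutatorElement_rowPerm_colPerm hij v _

theorem LinearModel.steinbergRel (m : LinearModel M V) :
    SteinbergRel Prod.fst fun i j s => colPerm i j (letterOrId m.letter s) where
  mul_self i j s hij := by
    rw [colPerm_of_ne hij]
    exact onePlus_mul_self _ _
  comm_none_left _ _ _ _ hik hkj hij := commutatorElement_colPerm hik hkj hij _ _
  comm_none_right _ _ _ _ hik hkj hij := commutatorElement_colPerm hik hkj hij _ _
  comm_eq_one _ _ _ _ _ _ hik hlj hji hkl := commutatorElement_colPerm_of_ne hik hlj hji hkl _ _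
  comm_pivot _ _ _ _ _ _ hik hil hij _ hkj hlj := by
    rw [commutatorElement_colPerm hik hkj hij, commutatorElement_colPerm hil hlj hij]
  comm_letters _ _ _ s t hik hij hkj hst := by
    rw [commutatorElement_colPerm hik hkj hij, commutatorElement_colPerm hik hkj hij]
    exact congrArg _ (LinearMap.ext (m.letter_comm t s hst.symm))
  diag _ _ := dif_pos rfl

theorem LinearModel.ruleRel (m : LinearModel M V) :
    RuleRel M (fun q => rowPerm (m.vec q)) fun i j s => colPerm i j (letterOrId m.letter s) where
  steinberg := m.steinbergRel
  isRow q := isRow_rowPerm m.letter (m.vec q)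
  rule q a haccept hreject j := by
    rw [actWord_rowPerm, actWord_rowPerm, m.rule q a haccept hreject]
  accept j := by rw [m.accept, rowPerm_zero]

/-- The permutations of the model space by which the generators act, where `x` is the vector of the
input. -/
noncomputable def LinearModel.genPerm (m : LinearModel M V) {x : V} (hx : x ≠ 0) :
    Gen Q K A → Equiv.Perm (ModelSpace V)
  | .row q j => rowPerm (m.vec q) j
  | .col i j s => colPerm i j (letterOrId m.letter s)
  | .alt π => cubePerm hx π
  | .test => rowPerm x 0

theorem LinearModel.machineGroupRel (m : LinearModel M V) {w : List (Letter Q K A)}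
    (hw : evalWord (fun s => m.letter s) (m.vec M.start) w ≠ 0) :
    MachineGroupRel M w (m.genPerm hw) where
  ruleRel := m.ruleRel
  alt_mul _ _ := map_mul (cubePerm hw) _ _
  alt_shift := cubePerm_cubeShiftSnd hw
  test_conj _ := rowPerm_conj_cubePerm hw _
  test_eq := by
    refine .trans ?_ ((isRow_rowPerm m.letter (m.vec M.start)).zigzag_eq m.steinbergRel w).symm
    rw [actWord_rowPerm]
    rfl

end PermutationModel

section GeneratingAlternating

open scoped commutatorElement Pointwise

variable {Ω : Type*}

theorem commutatorElement_eq_swap_mul_swap [DecidableEq Ω] {g h : Equiv.Perm Ω} (hg : g * g = 1)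
    (hh : h * h = 1) {a : Ω} (hga : g a ≠ a) (hha : h a ≠ a)
    (hgh : ∀ x, g x ≠ x → h x ≠ x → x = a) :
    g a ≠ h a ∧ ⁅g, h⁆ = Equiv.swap a (g a) * Equiv.swap (g a) (h a) := by
  have hgg (x) : g (g x) = x := Equiv.Perm.congr_fun hg x
  have hhh (x) : h (h x) = x := Equiv.Perm.congr_fun hh x
  have h_fixes_ga : h (g a) = g a := by grind
  have g_fixes_ha : g (h a) = h a := by grind
  have hne : g a ≠ h a := by grind
  have commute_elsewhere (x) (hxa : x ≠ a) (hxg : x ≠ g a) (hxh : x ≠ h a) :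
      g (h x) = h (g x) := by
    rcases eq_or_ne (h x) x with hx | hx
    · have : h (g x) = g x := by grind +splitImp
      rw [hx, this]
    · have : g (h x) = h x := by grind +splitImp
      have : g x = x := by grind
      simp only [*]
  refine ⟨hne, Equiv.ext fun x => ?_⟩
  rw [commutatorElement_def, inv_eq_of_mul_eq_one_left hg, inv_eq_of_mul_eq_one_left hh]
  simp only [Equiv.Perm.mul_apply]
  grind

theorem mem_stabilizer_of_isBlock {G : Subgroup (Equiv.Perm Ω)} {B : Set Ω}
    (hB : MulAction.IsBlock G B) {k : Equiv.Perm Ω} (hk : k ∈ G) {x : Ω} (hx : x ∈ B)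
    (hkx : k x ∈ B) : k ∈ MulAction.stabilizer (Equiv.Perm Ω) B :=
  hB.smul_eq_of_mem (g := ⟨k, hk⟩) hx hkx

theorem mem_of_sameCycle_of_mem_stabilizer {B : Set Ω} {k : Equiv.Perm Ω}
    (hk : k ∈ MulAction.stabilizer (Equiv.Perm Ω) B) {x y : Ω} (hxy : k.SameCycle x y)
    (hx : x ∈ B) : y ∈ B := by
  obtain ⟨i, rfl⟩ := hxy
  exact (MulAction.mem_stabilizer_set.1 (zpow_mem hk i) x).2 hx

theorem isPretransitive_of_sameCycle {G : Subgroup (Equiv.Perm Ω)} {Y u : Equiv.Perm Ω}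
    (hY : Y ∈ G) (hu : u ∈ G) {a z : Ω} (hYz : ∀ x ≠ z, Y.SameCycle a x) (huz : u z ≠ z) :
    MulAction.IsPretransitive G Ω := by
  refine (MulAction.isPretransitive_iff_base a).2 fun x => ?_
  rcases eq_or_ne x z with rfl | hx
  · obtain ⟨i, hi⟩ := hYz (u x) huz
    exact ⟨⟨u⁻¹ * Y ^ i, mul_mem (inv_mem hu) (zpow_mem hY i)⟩,
      (congrArg _ hi).trans (u.symm_apply_apply x)⟩
  · obtain ⟨i, hi⟩ := hYz x hx
    exact ⟨⟨Y ^ i, zpow_mem hY i⟩, hi⟩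

theorem mem_of_swap_mul_swap_mem_of_isBlock [DecidableEq Ω] {G : Subgroup (Equiv.Perm Ω)}
    {a b c : Ω} (hab : a ≠ b) (hac : a ≠ c) (hbc : b ≠ c)
    (hswap : Equiv.swap a b * Equiv.swap b c ∈ G) {B : Set Ω} (hB : MulAction.IsBlock G B)
    (ha : a ∈ B) (hB' : B.Nontrivial) : c ∈ B := by
  let τ := Equiv.swap a b * Equiv.swap b c
  have τ_a : τ a = b := by simp [τ, Equiv.swap_apply_of_ne_of_ne hab hac]
  have τ_b : τ b = c := by simp [τ, Equiv.swap_apply_of_ne_of_ne hac.symm hbc.symm]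
  obtain ⟨x, hx, hxa⟩ := hB'.exists_ne a
  rcases eq_or_ne x c with rfl | hxc
  · exact hx
  have τ_mem : τ ∈ MulAction.stabilizer (Equiv.Perm Ω) B := by
    rcases eq_or_ne x b with rfl | hxb
    · exact mem_stabilizer_of_isBlock hB hswap ha (τ_a.symm ▸ hx)
    · have τ_x : τ x = x := by
        simp only [τ, Equiv.Perm.mul_apply, Equiv.swap_apply_of_ne_of_ne, ne_eq,
          not_false_eq_true, *]
      exact mem_stabilizer_of_isBlock hB hswap hx (τ_x.symm ▸ hx)
  have mem_iff := MulAction.mem_stabilizer_set.1 τ_mem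
  exact τ_b ▸ (mem_iff b).2 (τ_a ▸ (mem_iff a).2 ha)

theorem isPreprimitive_of_swap_mul_swap_mem [DecidableEq Ω] {G : Subgroup (Equiv.Perm Ω)}
    {Y u : Equiv.Perm Ω} (hY : Y ∈ G) (hu : u ∈ G) {a b z : Ω} (hab : a ≠ b) (haY : a ≠ Y a)
    (hbY : b ≠ Y a) (hswap : Equiv.swap a b * Equiv.swap b (Y a) ∈ G)
    (hYz : ∀ x ≠ z, Y.SameCycle a x) (huz : u z ≠ z) (hu_fix : ∃ y ≠ z, u y = y) :
    MulAction.IsPreprimitive G Ω := by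
  have := isPretransitive_of_sameCycle hY hu hYz huz
  refine .of_isTrivialBlock_base a fun {B} ha hB =>
    B.subsingleton_or_nontrivial.imp_right fun hB' => ?_
  have Y_a_mem : Y a ∈ B := mem_of_swap_mul_swap_mem_of_isBlock hab haY hbY hswap hB ha hB'
  have mem_of_ne (x) (hx : x ≠ z) : x ∈ B :=
    mem_of_sameCycle_of_mem_stabilizer (mem_stabilizer_of_isBlock hB hY ha Y_a_mem) (hYz x hx) ha
  obtain ⟨y, hyz, huy⟩ := hu_fix
  have u_mem : u ∈ MulAction.stabilizer (Equiv.Perm Ω) B :=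
    mem_stabilizer_of_isBlock hB hu (mem_of_ne y hyz) (huy.symm ▸ mem_of_ne y hyz)
  refine Set.eq_univ_of_forall fun x => ?_
  rcases eq_or_ne x z with rfl | hx
  · exact (MulAction.mem_stabilizer_set.1 u_mem x).1 (mem_of_ne (u x) huz)
  · exact mem_of_ne x hx

theorem alternatingGroup_le_of_involutions [Fintype Ω] [DecidableEq Ω]
    {G : Subgroup (Equiv.Perm Ω)} {g h u Y : Equiv.Perm Ω} (hgG : g ∈ G) (hhG : h ∈ G)
    (huG : u ∈ G) (hYG : Y ∈ G) (hg : g * g = 1) (hh : h * h = 1) {a z : Ω} (hga : g a ≠ a)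
    (hha : h a ≠ a) (hgh : ∀ x, g x ≠ x → h x ≠ x → x = a) (hYa : Y a = h a)
    (hYz : ∀ x ≠ z, Y.SameCycle a x) (huz : u z ≠ z) (hu_fix : ∃ y ≠ z, u y = y) :
    alternatingGroup Ω ≤ G := by
  obtain ⟨hne, hcomm⟩ := commutatorElement_eq_swap_mul_swap hg hh hga hha hgh
  have comm_mem : ⁅g, h⁆ ∈ G :=
    mul_mem (mul_mem (mul_mem hgG hhG) (inv_mem hgG)) (inv_mem hhG)
  have isThreeCycle : (⁅g, h⁆).IsThreeCycle := by
    rw [hcomm, Equiv.swap_comm a]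
    exact Equiv.Perm.isThreeCycle_swap_mul_swap_same hga hne hha.symm
  refine Equiv.Perm.alternatingGroup_le_of_isPreprimitive_of_isThreeCycle_mem ?_ isThreeCycle
    comm_mem
  rw [hcomm, ← hYa] at comm_mem
  exact isPreprimitive_of_swap_mul_swap_mem hYG huG hga.symm (hYa ▸ hha.symm) (hYa ▸ hne) comm_mem
    hYz huz hu_fix

end GeneratingAlternating

section LongCycle

/-- The cycle on the first points of `Fin N`, of the greatest possible odd length. -/
def longCycle (N : ℕ) [NeZero N] : Equiv.Perm (Fin N) :=
  Fin.cycleRange ⟨2 * ((N - 1) / 2), by have := NeZero.pos N; omega⟩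

variable {N : ℕ} [NeZero N]

theorem longCycle_mem_alternatingGroup : longCycle N ∈ alternatingGroup (Fin N) := by
  rw [Equiv.Perm.mem_alternatingGroup, longCycle, Fin.sign_cycleRange]
  exact (even_two_mul _).neg_one_pow

theorem coe_longCycle_apply {j : Fin N} (hj : (j : ℕ) + 2 < N) : (longCycle N j : ℕ) = j + 1 :=
  Fin.coe_cycleRange_of_lt (Fin.lt_def.2 (by change (j : ℕ) < 2 * ((N - 1) / 2); omega))

theorem coe_longCycle_pow_apply (t : ℕ) {j : Fin N} (hj : (j : ℕ) + t + 1 < N) :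
    ((longCycle N ^ t) j : ℕ) = j + t := by
  induction t with
  | zero => rfl
  | succ t ih =>
    have ih := ih (by omega)
    rw [pow_succ', Equiv.Perm.mul_apply, coe_longCycle_apply (by omega), ih, add_assoc]

theorem sameCycle_longCycle {x y : Fin N} (hx : (x : ℕ) + 1 < N) (hy : (y : ℕ) + 1 < N) :
    (longCycle N).SameCycle x y := by
  have sameCycle_zero (x : Fin N) (hx : (x : ℕ) + 1 < N) : (longCycle N).SameCycle 0 x :=
    ⟨x, Fin.ext <| by
      rw [zpow_natCast, coe_longCycle_pow_apply _ (by simpa using hx), Fin.val_zero, zero_add]⟩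
  exact (sameCycle_zero x hx).symm.trans (sameCycle_zero y hy)

theorem alternatingGroup_le_of_longCycle_mem {G : Subgroup (Equiv.Perm (Fin N))}
    {g u : Equiv.Perm (Fin N)} (hgG : g ∈ G) (huG : u ∈ G) (hYG : longCycle N ∈ G)
    (hg : g * g = 1) {a : Fin N} (haN : 2 * (a : ℕ) + 1 < N) (hg_supp : ∀ x, g x ≠ x → x ≤ a)
    (hga : g a ≠ a) (hg0 : (g 0 : ℕ) = 1) {z : Fin N} (hz : (z : ℕ) + 1 = N) (huz : u z ≠ z)
    (hu_fix : ∃ y ≠ z, u y = y) : alternatingGroup (Fin N) ≤ G := by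
  let k := longCycle N ^ (a : ℕ)
  have k_apply {x : Fin N} (hx : x ≤ a) : (k x : ℕ) = x + a :=
    coe_longCycle_pow_apply _ (by omega)
  have k_zero : k 0 = a := Fin.ext <| by rw [k_apply (Fin.zero_le a), Fin.val_zero, zero_add]
  have g0_le : g 0 ≤ a := hg_supp _ fun h => by
    rw [g.injective h, Fin.val_zero] at hg0
    exact zero_ne_one hg0
  have conj_apply (x : Fin N) : (k * g * k⁻¹) (k x) = k (g x) :=
    congrArg (fun y => k (g y)) (k.symm_apply_apply x)
  have conj_a : ((k * g * k⁻¹) a : ℕ) = a + 1 := by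
    rw [← k_zero, conj_apply, k_apply g0_le, hg0, k_zero, add_comm]
  have le_of_conj_ne (x) (hx : (k * g * k⁻¹) x ≠ x) : a ≤ x := by
    obtain ⟨y, rfl⟩ := k.surjective x
    rw [conj_apply] at hx
    have := k_apply (hg_supp y fun h => hx (congrArg k h))
    omega
  refine alternatingGroup_le_of_involutions (a := a) (z := z) hgG
    (mul_mem (mul_mem (pow_mem hYG _) hgG) (inv_mem (pow_mem hYG _))) huG hYG hg
    (by rw [conj_mul, hg, mul_one, mul_inv_cancel]) hga ?_
    (fun x hgx hx => (hg_supp x hgx).antisymm (le_of_conj_ne x hx)) ?_ (fun x hx => ?_) huz hu_fix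
  · exact fun h => a.val.succ_ne_self (conj_a.symm.trans (congrArg Fin.val h))
  · exact Fin.ext <| (coe_longCycle_apply (by omega)).trans conj_a.symm
  · exact sameCycle_longCycle (by omega) (by omega)

end LongCycle

section Embedding

theorem exists_embedding_extend {n : ℕ} {P Ω : Type*} [Fintype P] {t : Finset Ω}
    (ht : Fintype.card P = t.card) {p : Fin n → P} (hp : Function.Injective p) {q : Fin n → Ω}
    (hq : Function.Injective q) (hqt : ∀ k, q k ∈ t) :
    ∃ i : P ↪ Ω, (∀ x, i x ∈ t) ∧ ∀ k, i (p k) = q k := by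
  let e : P ≃ t := Fintype.equivOfCardEq (ht.trans (Fintype.card_coe t).symm)
  have := Equiv.Perm.isMultiplyPretransitive t n
  obtain ⟨σ, hσ⟩ := MulAction.exists_smul_eq (Equiv.Perm t)
    (⟨e ∘ p, e.injective.comp hp⟩ : Fin n ↪ t)
    ⟨fun k => ⟨q k, hqt k⟩, fun _ _ h => hq (congrArg Subtype.val h)⟩
  exact ⟨(e.trans σ).toEmbedding.trans (.subtype _), fun x => (σ (e x)).2,
    fun k => congrArg Subtype.val (DFunLike.congr_fun hσ k)⟩

theorem exists_embedding_fin {P : Type*} [Fintype P] {L N : ℕ} [NeZero N]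
    (hP : Fintype.card P = L + 2) (hN : L + 2 < N) {p₀ p₁ p₂ p₃ : P}
    (hp : Function.Injective ![p₀, p₁, p₂, p₃]) :
    ∃ i : P ↪ Fin N, i p₀ = 0 ∧ (i p₁ : ℕ) = 1 ∧ (i p₂ : ℕ) = L ∧ (i p₃ : ℕ) + 1 = N ∧
      ∀ x ≠ p₃, (i x : ℕ) ≤ L := by
  have hL : 2 ≤ L := by simpa [hP] using Fintype.card_le_of_injective _ hp
  let a : Fin N := ⟨L, by omega⟩
  let last : Fin N := ⟨N - 1, by omega⟩
  have last_notMem : last ∉ Finset.Iic a := by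
    simp only [Finset.mem_Iic, Fin.le_def, last, a]
    omega
  let q : Fin 4 → Fin N := ![0, ⟨1, by omega⟩, a, last]
  have q_strictMono : StrictMono q := by
    rw [Fin.strictMono_iff_lt_succ, Fin.forall_fin_succ, Fin.forall_fin_two]
    refine ⟨Fin.lt_def.2 zero_lt_one, Fin.lt_def.2 hL, Fin.lt_def.2 ?_⟩
    change L < N - 1
    omega
  have q_mem (k) : q k ∈ insert last (Finset.Iic a) := by
    rw [Finset.mem_insert, Finset.mem_Iic]
    fin_cases k
    exacts [.inr (Fin.zero_le a), .inr (one_le_two.trans hL), .inr le_rfl, .inl rfl]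
  obtain ⟨i, hi_mem, hi⟩ := exists_embedding_extend (t := insert last (Finset.Iic a))
    (by rw [Finset.card_insert_of_notMem last_notMem, Fin.card_Iic, hP]) hp
    q_strictMono.injective q_mem
  have i_p₃ : i p₃ = last := hi 3
  refine ⟨i, hi 0, congrArg Fin.val (hi 1), congrArg Fin.val (hi 2), ?_, fun x hx => ?_⟩
  · rw [i_p₃]
    exact Nat.sub_add_cancel (by omega)
  · have i_ne : i x ≠ last := i_p₃ ▸ i.injective.ne hx
    exact Fin.le_def.1 (Finset.mem_Iic.1 (Finset.mem_of_mem_insert_of_ne (hi_mem x) i_ne))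

theorem alternatingGroup_le_of_viaEmbedding_mem {P : Type*} {N L : ℕ} [NeZero N]
    (hN : 2 * L + 2 < N) {g u : Equiv.Perm P} (hg : g * g = 1) {i : P ↪ Fin N} {p₀ p₁ p₂ : P}
    (hp₀ : i p₀ = 0) (hgp₀ : (i (g p₀) : ℕ) = 1) (hp₁ : (i p₁ : ℕ) = L)
    (hgp₁ : g p₁ ≠ p₁) (hp₂ : (i p₂ : ℕ) + 1 = N) (hi : ∀ x ≠ p₂, (i x : ℕ) ≤ L)
    (hgp₂ : g p₂ = p₂) (hup₂ : u p₂ ≠ p₂) {G : Subgroup (Equiv.Perm (Fin N))}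
    (hgG : Equiv.Perm.viaEmbeddingHom i g ∈ G) (huG : Equiv.Perm.viaEmbeddingHom i u ∈ G)
    (hYG : longCycle N ∈ G) : alternatingGroup (Fin N) ≤ G := by
  have via_apply (σ : Equiv.Perm P) (x) : Equiv.Perm.viaEmbeddingHom i σ (i x) = i (σ x) :=
    Equiv.Perm.viaEmbedding_apply σ i x
  have via_ne {σ : Equiv.Perm P} {y} (hy : Equiv.Perm.viaEmbeddingHom i σ y ≠ y) :
      ∃ x, σ x ≠ x ∧ i x = y := by
    by_cases hmem : y ∈ Set.range i
    · obtain ⟨x, rfl⟩ := hmem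
      exact ⟨x, fun h => hy ((via_apply σ x).trans (congrArg i h)), rfl⟩
    · exact absurd (Equiv.Perm.viaEmbedding_apply_of_notMem σ i y hmem) hy
  refine alternatingGroup_le_of_longCycle_mem (a := i p₁) (z := i p₂) hgG huG hYG
    (by rw [← map_mul, hg, map_one]) (by omega) (fun y hy => ?_) ?_ ?_ hp₂ ?_ ?_
  · obtain ⟨x, hx, rfl⟩ := via_ne hy
    exact Fin.le_def.2 (hp₁ ▸ hi x fun h => hx (h ▸ hgp₂))
  · exact via_apply g p₁ ▸ i.injective.ne hgp₁
  · rw [← hp₀, via_apply, hgp₀]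
  · exact via_apply u p₂ ▸ i.injective.ne hup₂
  · refine ⟨⟨L + 1, by omega⟩, fun h => ?_, by_contra fun hne => ?_⟩
    · rw [← h] at hp₂
      dsimp only at hp₂
      omega
    · obtain ⟨x, -, hix⟩ := via_ne hne
      have i_x : (i x : ℕ) = L + 1 := congrArg Fin.val hix
      rcases eq_or_ne x p₂ with rfl | h
      · omega
      · have := hi x h
        omega

theorem eventually_exists_alternatingGroup_le {P : Type*} [Finite P] {g u : Equiv.Perm P}
    (hg : g * g = 1) {p₀ p₁ p₂ : P} (hgp₀ : g p₀ ≠ p₀) (hgp₁ : g p₁ ≠ p₁) (h₀₁ : p₀ ≠ p₁)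
    (hg₀₁ : g p₀ ≠ p₁) (hgp₂ : g p₂ = p₂) (hup₂ : u p₂ ≠ p₂) :
    ∀ᶠ N in Filter.atTop, ∃ (i : P ↪ Fin N), ∃ Y ∈ alternatingGroup (Fin N),
      ∀ G : Subgroup (Equiv.Perm (Fin N)), Equiv.Perm.viaEmbeddingHom i g ∈ G →
        Equiv.Perm.viaEmbeddingHom i u ∈ G → Y ∈ G → alternatingGroup (Fin N) ≤ G := by
  have := Fintype.ofFinite P
  have hne {p : P} (hp : g p ≠ p) : p ≠ p₂ := fun h => hp (h ▸ hgp₂)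
  have injective : Function.Injective ![p₀, g p₀, p₁, p₂] := by
    simp only [Matrix.vecCons, Fin.cons_injective_iff]
    simp [Function.injective_of_subsingleton, h₀₁, hgp₀.symm, hg₀₁, hne hgp₀, hne hgp₁,
      hne (g.injective.ne hgp₀)]
  obtain ⟨L, hL⟩ := Nat.exists_eq_add_of_le' <| show 2 ≤ Fintype.card P from
    Fintype.one_lt_card_iff.2 ⟨p₀, p₁, h₀₁⟩
  filter_upwards [Filter.eventually_gt_atTop (2 * L + 2)] with N hN
  have : NeZero N := ⟨by omega⟩
  obtain ⟨i, hi₀, hig₀, hi₁, hi₂, hi⟩ := exists_embedding_fin hL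
    (show L + 2 < N by omega) injective
  exact ⟨i, longCycle N, longCycle_mem_alternatingGroup, fun _ =>
    alternatingGroup_le_of_viaEmbedding_mem hN hg hi₀ hig₀ hi₁ hgp₁ hi₂ hi hgp₂ hup₂⟩

end Embedding

section AlternatingQuotient

/-- Two disjoint copies of a permutation, which together form an even permutation. -/
def double (P : Type*) : Equiv.Perm P →* Equiv.Perm (Bool × P) where
  toFun σ := Equiv.prodCongrRight fun _ => σ
  map_one' := rfl
  map_mul' _ _ := rfl

theorem viaEmbeddingHom_double_mem_alternatingGroup {P Ω : Type*} [Finite P] [Fintype Ω]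
    [DecidableEq Ω] (i : Bool × P ↪ Ω) (σ : Equiv.Perm P) :
    Equiv.Perm.viaEmbeddingHom i (double P σ) ∈ alternatingGroup Ω := by
  classical
  have := Fintype.ofFinite P
  rw [Equiv.Perm.mem_alternatingGroup, Equiv.Perm.viaEmbeddingHom_apply, Equiv.Perm.viaEmbedding,
    Equiv.Perm.sign_extendDomain]
  change Equiv.Perm.sign (Equiv.prodCongrRight fun _ : Bool => σ) = 1
  rw [Equiv.Perm.sign_prodCongrRight, Fintype.prod_bool, Int.units_mul_self]

theorem eventually_exists_monoidHom_alternatingGroup {P : Type*} [Finite P] {g u : Equiv.Perm P}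
    (hg : g * g = 1) {p q : P} (hgp : g p ≠ p) (hgq : g q = q) (huq : u q ≠ q) :
    ∀ᶠ N in Filter.atTop, ∃ (F : Equiv.Perm P →* alternatingGroup (Fin N))
      (Y : alternatingGroup (Fin N)),
      ∀ G : Subgroup (alternatingGroup (Fin N)), F g ∈ G → F u ∈ G → Y ∈ G → G = ⊤ := by
  have eventually_le := eventually_exists_alternatingGroup_le (g := double P g) (u := double P u)
    (p₀ := (false, p)) (p₁ := (true, p)) (p₂ := (false, q)) (by rw [← map_mul, hg, map_one])
    (fun h => hgp (congrArg Prod.snd h)) (fun h => hgp (congrArg Prod.snd h))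
    (fun h => Bool.false_ne_true (congrArg Prod.fst h))
    (fun h => Bool.false_ne_true (congrArg Prod.fst h)) (congrArg (Prod.mk false) hgq)
    (fun h => huq (congrArg Prod.snd h))
  filter_upwards [eventually_le] with N ⟨i, Y, hY, hgen⟩
  refine ⟨((Equiv.Perm.viaEmbeddingHom i).comp (double P)).codRestrict _
    (viaEmbeddingHom_double_mem_alternatingGroup i), ⟨Y, hY⟩, fun G hgG huG hYG => ?_⟩
  have le_map := hgen (G.map (alternatingGroup (Fin N)).subtype) ⟨_, hgG, rfl⟩ ⟨_, huG, rfl⟩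
    ⟨_, hYG, rfl⟩
  exact top_le_iff.1 fun x _ =>
    (Subgroup.mem_map_iff_mem (Subgroup.subtype_injective _)).1 (le_map x.2)

theorem StackMachine.Rejects.eventually_exists_alternatingGroup {Q K A : Type} [Finite Q]
    [Fintype K] [Finite A] [DecidableEq K] {M : StackMachine Q K A} {n : ℕ}
    (hM : M.accept ≠ M.reject) (hn : M.Rejects n) :
    ∀ᶠ N in Filter.atTop, ∃ d : Option (Gen Q K A) → alternatingGroup (Fin N),
      MachineGroupRel M (M.inputWord n) (d ∘ some) ∧ Subgroup.closure (Set.range d) = ⊤ := by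
  obtain ⟨V, _, _, _, m, hw⟩ := hn.exists_linearModel hM
  let x := evalWord (fun s => m.letter s) (m.vec M.start) (M.inputWord n)
  have row_ne : rowPerm x 0 (1, 0) ≠ (1, 0) := fun h => hw <| by
    simpa [rowPerm_apply] using congrFun (congrArg Prod.snd h) 0
  have row_eq : rowPerm x 0 (0, Pi.single 1 x) = (0, Pi.single 1 x) := by simp [rowPerm_apply]
  have col_ne : colPerm 1 2 LinearMap.id ((0, Pi.single 1 x) : ModelSpace V) ≠
      (0, Pi.single 1 x) := fun h => hw <| by
    simpa [colPerm_apply] using congrFun (congrArg Prod.snd h) 2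
  filter_upwards [eventually_exists_monoidHom_alternatingGroup (rowPerm_mul_self x 0) row_ne row_eq
    col_ne] with N ⟨F, Y, hgen⟩
  let d : Option (Gen Q K A) → alternatingGroup (Fin N) := fun y => y.elim Y (F ∘ m.genPerm hw)
  have mem (y) : d y ∈ Subgroup.closure (Set.range d) := Subgroup.subset_closure ⟨y, rfl⟩
  exact ⟨d, (m.machineGroupRel hw).map F,
    hgen _ (mem (some .test)) (mem (some (.col 1 2 none))) (mem none)⟩

end AlternatingQuotient

section Undecidability

theorem not_computablePred_of_isCyclic_of_alternatingGroup
    {p : (Σ s : ℕ, List (List (Fin s × Bool))) → Prop}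
    (hcyclic : ∀ P, IsCyclic (presentedGroupOf P) → ¬p P)
    (halternating : ∀ P, (∀ᶠ N in Filter.atTop,
      ∃ φ : presentedGroupOf P →* alternatingGroup (Fin N), Function.Surjective φ) → p P) :
    ¬ComputablePred p := by
  intro hp
  obtain ⟨Q, K, A, _, _, _, _, M, hM, hinseparable⟩ := exists_stackMachine_not_computablePred
  have := Fintype.ofFinite K
  obtain ⟨R, hR, hom_iff⟩ := exists_computable_machineGroup M
  refine hinseparable (p ∘ R) (fun n hn => hcyclic _ ?_) (fun n hn => halternating _ ?_) ?_
  · obtain ⟨d, hd, hclosure⟩ := (hom_iff n _).1 ⟨MonoidHom.id _, Function.surjective_id⟩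
    exact isCyclic_of_accepts hd hclosure hn
  · filter_upwards [hn.eventually_exists_alternatingGroup hM] with N hN
    exact (hom_iff n _).2 hN
  · obtain ⟨f, hf, rfl⟩ := ComputablePred.computable_iff.1 hp
    exact ComputablePred.computable_iff.2 ⟨f ∘ R, hf.comp hR, rfl⟩

end Undecidability

end AlternatingQuotients

/-- Theorem 1(ii) for an infinite family of alternating groups: there is no algorithm that,
given a finite presentation, decides whether the group presented has infinitely many
quotients among the groups `Alt(n)` for `n ∈ S`. -/
theorem stmt_5 (S : Set ℕ) (hS : S.Infinite) (hS5 : ∀ n ∈ S, 5 ≤ n) :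
    ¬ ComputablePred (fun p : Σ s : ℕ, List (List (Fin s × Bool)) =>
        {n ∈ S | ∃ φ : presentedGroupOf p →* alternatingGroup (Fin n),
          Function.Surjective φ}.Infinite) := by
  refine AlternatingQuotients.not_computablePred_of_isCyclic_of_alternatingGroup
    (fun P _ hinfinite => ?_) fun P hP => ?_
  · obtain ⟨n, hnS, φ, hφ⟩ := hinfinite.nonempty
    have card_le : Nat.card (Fin n) ≤ 3 :=
      alternatingGroup.isCyclic_iff_card_le_three.1 (isCyclic_of_surjective φ hφ)
    have := hS5 n hnS
    rw [Nat.card_fin] at card_le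
    omega
  · obtain ⟨N₀, hN₀⟩ := Filter.eventually_atTop.1 hP
    refine (hS.sdiff (Set.finite_Iio N₀)).mono ?_
    rintro N ⟨hNS, hN⟩
    exact ⟨hNS, hN₀ N (not_lt.1 hN)⟩
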